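/- A quintic del Pezzo surface S ⊂ P^5 admits a congruence of secant lines: through the general point of P^5 there passes a unique secant line to S. The general line of this congruence is the general fiber of the dominant map μ: P^5 ⇢ P^4 defined by the 5-dimensional linear system of quadric hypersurfaces through S, and if X is a general cubic fourfold containing S, the restriction μ|_X: X ⇢ P^4 is birational. -/

import Mathlib

noncomputable section
open MvPolynomial

/-- Complex projective `n`-space, as the projectivization of `ℂ^{n+1}`. -/
abbrev P (n : ℕ) := Projectivization ℂ (Fin (n + 1) → ℂ)

instance (n : ℕ) : Nonempty (P n) :=
  ⟨Projectivization.mk ℂ (fun _ => 1) (by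
    intro h
    exact one_ne_zero (congrFun h 0))⟩

/-- A property `Φ` holds at a general (generic) point of affine space `ℂ^N`. -/
def GenericAff {N : ℕ} (Φ : (Fin N → ℂ) → Prop) : Prop :=
  ∃ g : MvPolynomial (Fin N) ℂ, g ≠ 0 ∧ ∀ v, eval v g ≠ 0 → Φ v

/-- A property `Φ` holds at a general point of `ℙ^n`. -/
def GenericP {n : ℕ} (Φ : P n → Prop) : Prop :=
  GenericAff fun v : Fin (n + 1) → ℂ => ∀ h : v ≠ 0, Φ (Projectivization.mk ℂ v h)

/-- Projective algebraic subsets of `ℙ^n`: common zero loci of homogeneous polynomials. -/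
def PAlgSet {n : ℕ} (Z : Set (P n)) : Prop :=
  ∃ I : Set (MvPolynomial (Fin (n + 1)) ℂ),
    (∀ f ∈ I, ∃ d, f.IsHomogeneous d) ∧ Z = {x | ∀ f ∈ I, eval x.rep f = 0}

/-- Zariski closure of a subset of `ℙ^n`. -/
def zclosure {n : ℕ} (A : Set (P n)) : Set (P n) := ⋂₀ {Z | PAlgSet Z ∧ A ⊆ Z}

/-- A property `Φ` holds at a general point of the subvariety `A ⊆ ℙ^n`. -/
def GenericOn {n : ℕ} (A : Set (P n)) (Φ : P n → Prop) : Prop :=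
  ∃ Z, PAlgSet Z ∧ ¬A ⊆ Z ∧ ∀ x ∈ A, x ∉ Z → Φ x

/-- The projective linear subspace of `ℙ^n` corresponding to a linear subspace `W ⊆ ℂ^{n+1}`. -/
def projLinear {n : ℕ} (W : Submodule ℂ (Fin (n + 1) → ℂ)) : Set (P n) :=
  {x | x.submodule ≤ W}

/-- Lines in `ℙ^n`. -/
def IsLine {n : ℕ} (L : Set (P n)) : Prop :=
  ∃ W : Submodule ℂ (Fin (n + 1) → ℂ), Module.finrank ℂ W = 2 ∧ L = projLinear W

/-- `L` is a secant line of `S`: a line meeting `S` in at least two points. -/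
def IsSecantLine {n : ℕ} (L S : Set (P n)) : Prop :=
  IsLine L ∧ ∃ a ∈ L ∩ S, ∃ b ∈ L ∩ S, a ≠ b

/-- The standard degree-`d` rational normal curve parametrization vector evaluated at `t ∈ ℂ²`. -/
def rncVec (d : ℕ) (t : Fin 2 → ℂ) : Fin (d + 1) → ℂ := fun i => t 0 ^ (i : ℕ) * t 1 ^ (d - (i : ℕ))

/-- `C ⊆ ℙ^n` is a rational normal curve of degree `d` (in its span):
the image of `ℙ^1` under a rank `d+1` linear reembedding of the degree-`d` Veronese. -/
def IsRNCdeg {n : ℕ} (d : ℕ) (C : Set (P n)) : Prop :=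
  ∃ M : Matrix (Fin (n + 1)) (Fin (d + 1)) ℂ, M.rank = d + 1 ∧
    C = {x | ∃ t : Fin 2 → ℂ, ∃ h : M.mulVec (rncVec d t) ≠ 0,
          x = Projectivization.mk ℂ _ h}

/-- Conics in `ℙ^n`. -/
def IsConic {n : ℕ} (C : Set (P n)) : Prop := IsRNCdeg 2 C

/-- Twisted cubic curves in `ℙ^n`. -/
def IsTwistedCubic {n : ℕ} (C : Set (P n)) : Prop := IsRNCdeg 3 C

/-- Evaluation of polynomials at (a representative of) `x ∈ ℙ^n`, as a linear map. -/
def homEvalAt {n : ℕ} (x : P n) : MvPolynomial (Fin (n + 1)) ℂ →ₗ[ℂ] ℂ :=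
  (MvPolynomial.aeval x.rep : MvPolynomial (Fin (n + 1)) ℂ →ₐ[ℂ] ℂ).toLinearMap

/-- Iterated partial derivative along a list of coordinate directions. -/
def pderivSeq {n : ℕ} (l : List (Fin (n + 1))) :
    MvPolynomial (Fin (n + 1)) ℂ →ₗ[ℂ] MvPolynomial (Fin (n + 1)) ℂ :=
  l.foldr (fun i h => (MvPolynomial.pderiv i).comp h) LinearMap.id

/-- The linear system of degree `d` hypersurfaces of `ℙ^n` having points of multiplicity at least
`m` along `S` (for `m = 1`, hypersurfaces through `S`; for `m = 2`, double points along `S`...). -/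
def linSys {n : ℕ} (S : Set (P n)) (d m : ℕ) : Submodule ℂ (MvPolynomial (Fin (n + 1)) ℂ) :=
  (homogeneousSubmodule (Fin (n + 1)) ℂ d) ⊓
    ⨅ (x : P n) (_ : x ∈ S) (l : List (Fin (n + 1))) (_ : l.length < m),
      LinearMap.ker ((homEvalAt x).comp (pderivSeq l))

/-- A rational map `ℙ^n ⇢ ℙ^k` given by `k+1` homogeneous polynomials of common degree `d`. -/
structure RatMap (n k : ℕ) where
  d : ℕ
  g : Fin (k + 1) → MvPolynomial (Fin (n + 1)) ℂ
  homog : ∀ i, (g i).IsHomogeneous d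

/-- The (total, with junk values on the base locus) map associated to a rational map datum. -/
def RatMap.toFun {n k : ℕ} (μ : RatMap n k) (x : P n) : P k :=
  if h : (fun i => eval x.rep (μ.g i)) ≠ 0 then Projectivization.mk ℂ _ h
  else Classical.arbitrary _

/-- `μ` restricted to `A ⊆ ℙ^n` is dominant onto `B ⊆ ℙ^k`: the image of `A` is contained in no
proper algebraic subset cutting `B` properly. -/
def DominantTo {n k : ℕ} (μ : RatMap n k) (A : Set (P n)) (B : Set (P k)) : Prop :=
  μ.toFun '' A ⊆ zclosure B ∧ ∀ Z, PAlgSet Z → ¬B ⊆ Z → ¬μ.toFun '' A ⊆ Z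

/-- `μ` restricted to `A ⊆ ℙ^n` is birational onto `B ⊆ ℙ^k`: there is a rational map in the
other direction which is generically a two-sided inverse. -/
def BirationalOnto {n k : ℕ} (μ : RatMap n k) (A : Set (P n)) (B : Set (P k)) : Prop :=
  DominantTo μ A B ∧
    ∃ ν : RatMap k n,
      GenericOn A (fun x => μ.toFun x ∈ B ∧ ν.toFun (μ.toFun x) = x) ∧
      GenericOn B (fun y => ν.toFun y ∈ A ∧ μ.toFun (ν.toFun y) = y)

/-- The subvariety `A ⊆ ℙ^n` is rational. -/
def IsRationalSub {n : ℕ} (A : Set (P n)) : Prop :=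
  ∃ (k : ℕ) (ν : RatMap k n), BirationalOnto ν Set.univ A

/-- The hypersurface in `ℙ^n` cut out by a (homogeneous) polynomial. -/
def hypersurface {n : ℕ} (f : MvPolynomial (Fin (n + 1)) ℂ) : Set (P n) :=
  {x | eval x.rep f = 0}

/-- Smoothness of the hypersurface `f = 0` (Jacobian criterion on the affine cone). -/
def SmoothHypPoly {n : ℕ} (f : MvPolynomial (Fin (n + 1)) ℂ) : Prop :=
  ∀ v : Fin (n + 1) → ℂ, v ≠ 0 → ¬∀ i, eval v (pderiv i f) = 0

/-- A property `Φ` holds for a general member of the linear system `W`. -/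
def GenericInSystem {n : ℕ} (W : Submodule ℂ (MvPolynomial (Fin (n + 1)) ℂ))
    (Φ : MvPolynomial (Fin (n + 1)) ℂ → Prop) : Prop :=
  ∀ (N : ℕ) (ψ : (Fin N → ℂ) →ₗ[ℂ] MvPolynomial (Fin (n + 1)) ℂ),
    LinearMap.range ψ = W → GenericAff fun c => Φ (ψ c)

/-- Four points of `ℙ²` are in general position: no three of them lie on a line. -/
def GeneralPosition₄ (p : Fin 4 → P 2) : Prop :=
  ∀ i j k : Fin 4, i ≠ j → i ≠ k → j ≠ k →
    LinearIndependent ℂ ![(p i).rep, (p j).rep, (p k).rep]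

/-- The (closure of the) image of `ℙ²` in `ℙ⁵` under the rational map defined by a
`6`-dimensional linear system `b` of plane curves. -/
def planarImage (b : Fin 6 → MvPolynomial (Fin 3) ℂ) : Set (P 5) :=
  zclosure {y : P 5 | ∃ x : P 2, ∃ h : (fun i => MvPolynomial.eval x.rep (b i)) ≠ 0,
    y = Projectivization.mk ℂ _ h}

/-- A property `Φ` holds for a general `m`-tuple of points of the subvariety `A ⊆ ℙⁿ`. -/
def GenericTuple {n : ℕ} (m : ℕ) (A : Set (P n)) (Φ : (Fin m → P n) → Prop) : Prop :=
  ∃ g : MvPolynomial (Fin m × Fin (n + 1)) ℂ,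
    (∃ u : Fin m → {v : Fin (n + 1) → ℂ // v ≠ 0},
      (∀ j, Projectivization.mk ℂ (u j).1 (u j).2 ∈ A) ∧
      MvPolynomial.eval (fun q => (u q.1).1 q.2) g ≠ 0) ∧
    ∀ u : Fin m → {v : Fin (n + 1) → ℂ // v ≠ 0},
      (∀ j, Projectivization.mk ℂ (u j).1 (u j).2 ∈ A) →
      MvPolynomial.eval (fun q => (u q.1).1 q.2) g ≠ 0 →
      Φ fun j => Projectivization.mk ℂ (u j).1 (u j).2

/-- The affine cone over the linear span of a subset of `ℙⁿ`. -/
def spanCone {n : ℕ} (A : Set (P n)) : Submodule ℂ (Fin (n + 1) → ℂ) :=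
  ⨆ x ∈ A, x.submodule

/-- The (closure of the) image of `A ⊆ ℙⁿ` under the linear projection induced by a linear
map `f` of the underlying vector spaces (e.g. a projection from a linear center). -/
def linProjImage {n k : ℕ} (f : (Fin (n + 1) → ℂ) →ₗ[ℂ] (Fin (k + 1) → ℂ))
    (A : Set (P n)) : Set (P k) :=
  zclosure {y : P k | ∃ x ∈ A, ∃ h : f x.rep ≠ 0, y = Projectivization.mk ℂ _ h}

/-- The secant variety of `S ⊆ ℙⁿ`: the closure of the union of its secant lines. -/
def secantVariety {n : ℕ} (S : Set (P n)) : Set (P n) :=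
  zclosure {z | ∃ L, IsSecantLine L S ∧ z ∈ L}

/-!
All quintic del Pezzo surfaces are projectively equivalent, so `S` may be taken to be the
cyclically symmetric model cut out by the five quadrics
`Q_j = x_{j+1} x_{j-1} - x_0 x_j - x_0 ^ 2`, `j` modulo `5`. Their linear syzygies say that a point
`x` with `Q(x) = y` satisfies a system of linear equations depending only on `y`. For general `y`
its solution space is a line `L_y`, and `Q` restricted to `L_y` is `y` times a binary quadratic
form with two distinct roots: `L_y` is a secant line, it is the fibre of `Q` over `y`, and every
secant line through a general point of `L_y` is of this kind. A cubic through `S` restricted to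
`L_y` is the product of this quadratic form with a linear one, whose zero is the residual
intersection of `L_y` with the cubic. Mapping `y` to this point inverts `Q` on the cubic.

Smoothness is an open condition on the members of a linear system, by the Nullstellensatz and the
nonvanishing of a Macaulay determinant. A smooth cubic through `S` is recognized by its reduction
modulo two.
-/

namespace QuinticDelPezzo

/-! ### Homogeneous polynomials and linear changes of coordinates -/

section Homogeneous

variable {R σ τ : Type*} [CommSemiring R]

lemma eval_smul_of_isHomogeneous {f : MvPolynomial σ R} {d : ℕ} (hf : f.IsHomogeneous d) (a : R)
    (v : σ → R) : eval (a • v) f = a ^ d * eval v f := by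
  rw [eval_eq, eval_eq, Finset.mul_sum]
  refine Finset.sum_congr rfl fun m hm => ?_
  simp only [Pi.smul_apply, smul_eq_mul, mul_pow, Finset.prod_mul_distrib,
    Finset.prod_pow_eq_pow_sum]
  rw [← hf.degree_eq_sum_deg_support hm]
  ring

lemma eval_aeval (g : σ → MvPolynomial τ R) (f : MvPolynomial σ R) (v : τ → R) :
    eval v (aeval g f) = eval (fun i => eval v (g i)) f := by
  simp only [← aeval_eq_eval]
  exact comp_aeval_apply g (aeval v) f

lemma ne_zero_of_eval_ne_zero {g : MvPolynomial σ R} {v : σ → R} (h : eval v g ≠ 0) : g ≠ 0 := by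
  rintro rfl
  simp at h

lemma exists_eval_ne_zero {K : Type*} [CommRing K] [IsDomain K] [Infinite K]
    {g : MvPolynomial σ K} (hg : g ≠ 0) : ∃ v, eval v g ≠ 0 := by
  by_contra! h
  exact hg (MvPolynomial.funext fun v => by rw [h v, map_zero])

variable [Fintype σ] [DecidableEq σ]

/-- A linear functional, as a linear form in the coordinates. -/
def linForm (φ : (σ → R) →ₗ[R] R) : MvPolynomial σ R := ∑ k, C (φ (Pi.single k 1)) * X k

@[simp]
lemma eval_linForm (φ : (σ → R) →ₗ[R] R) (v : σ → R) : eval v (linForm φ) = φ v := by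
  conv_rhs => rw [pi_eq_sum_univ' v, map_sum]
  simp [linForm, mul_comm]

lemma isHomogeneous_linForm (φ : (σ → R) →ₗ[R] R) : (linForm φ).IsHomogeneous 1 :=
  IsHomogeneous.sum _ _ _ fun _ _ => isHomogeneous_C_mul_X _ _

/-- Pullback of polynomials along a linear map. -/
def pullback (E : (σ → R) →ₗ[R] (τ → R)) : MvPolynomial τ R →ₐ[R] MvPolynomial σ R :=
  aeval fun i => linForm (LinearMap.proj i ∘ₗ E)

@[simp]
lemma eval_pullback (E : (σ → R) →ₗ[R] (τ → R)) (f : MvPolynomial τ R) (v : σ → R) :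
    eval v (pullback E f) = eval (E v) f := by
  simp only [pullback, eval_aeval, eval_linForm]
  rfl

lemma isHomogeneous_pullback (E : (σ → R) →ₗ[R] (τ → R)) {f : MvPolynomial τ R} {d : ℕ}
    (hf : f.IsHomogeneous d) : (pullback E f).IsHomogeneous d := by
  have h := hf.aeval (fun i => linForm (LinearMap.proj i ∘ₗ E)) fun i => isHomogeneous_linForm _
  rwa [one_mul] at h

lemma eval_pderiv_pullback [Fintype τ] (E : (σ → R) →ₗ[R] (τ → R)) (f : MvPolynomial τ R) (i : σ)
    (v : σ → R) :
    eval v (pderiv i (pullback E f)) = ∑ k, E (Pi.single i 1) k * eval (E v) (pderiv k f) := by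
  classical
  induction f using MvPolynomial.induction_on with
  | C a => simp [pullback]
  | add p q hp hq => simp only [map_add, hp, hq, mul_add, Finset.sum_add_distrib]
  | mul_X p j hp =>
    have hX : eval v (pderiv i (pullback E (X j))) = E (Pi.single i 1) j := by
      simp [pullback, linForm, pderiv_X, Pi.single_apply]
    simp only [map_mul, Derivation.leibniz, smul_eq_mul, map_add, hX, hp, eval_pullback, eval_X,
      mul_add, Finset.sum_add_distrib, pderiv_X, Pi.single_apply]
    congr 1
    · simp [mul_comm]
    · rw [Finset.mul_sum]
      exact Finset.sum_congr rfl fun k _ => by ring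

end Homogeneous

lemma pullback_pullback_symm {K σ : Type*} [Field K] [Infinite K] [Fintype σ] [DecidableEq σ]
    (E : (σ → K) ≃ₗ[K] (σ → K)) (f : MvPolynomial σ K) :
    pullback E.toLinearMap (pullback E.symm.toLinearMap f) = f :=
  MvPolynomial.funext fun v => by simp

/-! ### Genericity -/

section Genericity

variable {n k d : ℕ}

lemma eval_mk_rep_eq_zero_iff {f : MvPolynomial (Fin (n + 1)) ℂ} (hf : f.IsHomogeneous d)
    {v : Fin (n + 1) → ℂ} (hv : v ≠ 0) :
    eval (Projectivization.mk ℂ v hv).rep f = 0 ↔ eval v f = 0 := by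
  obtain ⟨a, ha⟩ := Projectivization.exists_smul_eq_mk_rep ℂ v hv
  rw [← ha, Units.smul_def, eval_smul_of_isHomogeneous hf]
  simp

lemma mem_linSys_one {S : Set (P n)} {f : MvPolynomial (Fin (n + 1)) ℂ} :
    f ∈ linSys S d 1 ↔ f.IsHomogeneous d ∧ ∀ x ∈ S, eval x.rep f = 0 := by
  simp only [linSys, Submodule.mem_inf, mem_homogeneousSubmodule, Submodule.mem_iInf,
    LinearMap.mem_ker, LinearMap.comp_apply, Nat.lt_one_iff, List.length_eq_zero_iff]
  refine and_congr_right fun _ => forall₂_congr fun x _ => ?_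
  simp [homEvalAt, pderivSeq, aeval_eq_eval]

lemma _root_.GenericAff.and {N : ℕ} {Φ Ψ : (Fin N → ℂ) → Prop} (hΦ : GenericAff Φ)
    (hΨ : GenericAff Ψ) : GenericAff fun v => Φ v ∧ Ψ v := by
  obtain ⟨g, hg, hgΦ⟩ := hΦ
  obtain ⟨k, hk, hkΨ⟩ := hΨ
  refine ⟨g * k, mul_ne_zero hg hk, fun v hv => ?_⟩
  rw [map_mul] at hv
  exact ⟨hgΦ v (left_ne_zero_of_mul hv), hkΨ v (right_ne_zero_of_mul hv)⟩

lemma genericOn_of_eval_ne_zero {A : Set (P n)} {Φ : P n → Prop}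
    {g : MvPolynomial (Fin (n + 1)) ℂ} (hg : g.IsHomogeneous d)
    (hA : ∃ (v : _) (hv : v ≠ 0), Projectivization.mk ℂ v hv ∈ A ∧ eval v g ≠ 0)
    (h : ∀ (v : _) (hv : v ≠ 0), Projectivization.mk ℂ v hv ∈ A → eval v g ≠ 0 →
      Φ (Projectivization.mk ℂ v hv)) : GenericOn A Φ := by
  refine ⟨{x | ∀ f ∈ ({g} : Set _), eval x.rep f = 0}, ⟨{g}, ?_, rfl⟩, fun hsub => ?_, ?_⟩
  · rintro _ rfl
    exact ⟨d, hg⟩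
  · obtain ⟨v, hv, hvA, hvg⟩ := hA
    exact hvg ((eval_mk_rep_eq_zero_iff hg hv).mp (hsub hvA g rfl))
  · intro x
    induction x using Projectivization.ind with
    | h v hv =>
      intro hvA hvZ
      refine h v hv hvA fun hvg => hvZ ?_
      rintro _ rfl
      rwa [eval_mk_rep_eq_zero_iff hg]

lemma _root_.GenericOn.genericP {Φ : P n → Prop} (h : GenericOn Set.univ Φ) : GenericP Φ := by
  obtain ⟨_, ⟨I, hI, rfl⟩, hne, hΦ⟩ := h
  obtain ⟨x, -, hx⟩ := Set.not_subset.mp hne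
  simp only [Set.mem_ofPred_eq, not_forall] at hx
  obtain ⟨f, hf, hfx⟩ := hx
  obtain ⟨d, hd⟩ := hI f hf
  exact ⟨f, ne_zero_of_eval_ne_zero hfx, fun v hv hv0 => hΦ _ trivial fun hvZ =>
    hv ((eval_mk_rep_eq_zero_iff hd hv0).mp (hvZ f hf))⟩

end Genericity

/-! ### Rational maps -/

section RatMap

variable {n k d : ℕ}

/-- The polynomial map of affine cones underlying a rational map. -/
def _root_.RatMap.lift (μ : RatMap n k) (v : Fin (n + 1) → ℂ) : Fin (k + 1) → ℂ :=
  fun i => eval v (μ.g i)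

lemma _root_.RatMap.lift_smul (μ : RatMap n k) (a : ℂ) (v : Fin (n + 1) → ℂ) :
    μ.lift (a • v) = a ^ μ.d • μ.lift v :=
  funext fun i => eval_smul_of_isHomogeneous (μ.homog i) a v

lemma _root_.RatMap.toFun_mk (μ : RatMap n k) {v : Fin (n + 1) → ℂ} (hv : v ≠ 0)
    (h : μ.lift v ≠ 0) :
    μ.toFun (Projectivization.mk ℂ v hv) = Projectivization.mk ℂ (μ.lift v) h := by
  obtain ⟨a, ha⟩ := Projectivization.exists_smul_eq_mk_rep ℂ v hv
  have hrep : μ.lift (Projectivization.mk ℂ v hv).rep = (a : ℂ) ^ μ.d • μ.lift v := by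
    rw [← ha, Units.smul_def, RatMap.lift_smul]
  have hne : μ.lift (Projectivization.mk ℂ v hv).rep ≠ 0 :=
    hrep ▸ smul_ne_zero (pow_ne_zero _ a.ne_zero) h
  exact (dif_pos hne).trans ((Projectivization.mk_eq_mk_iff' ℂ _ _ hne h).mpr ⟨_, hrep.symm⟩)

lemma _root_.RatMap.toFun_mk_of_lift_eq_smul {μ : RatMap n k} {v : Fin (n + 1) → ℂ} (hv : v ≠ 0)
    {w : Fin (k + 1) → ℂ} (hw : w ≠ 0) {c : ℂ} (hc : c ≠ 0) (h : μ.lift v = c • w) :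
    μ.toFun (Projectivization.mk ℂ v hv) = Projectivization.mk ℂ w hw := by
  rw [μ.toFun_mk hv (h ▸ smul_ne_zero hc hw), Projectivization.mk_eq_mk_iff']
  exact ⟨c, h.symm⟩

lemma dominantTo_univ_of_genericP {μ : RatMap n k} {A : Set (P n)}
    (h : GenericP fun y => y ∈ μ.toFun '' A) : DominantTo μ A Set.univ := by
  refine ⟨fun y _ => Set.mem_sInter.mpr fun Z hZ => hZ.2 (Set.mem_univ _), ?_⟩
  rintro Z hZ hne hsub
  have hZ : GenericP (· ∉ Z) := GenericOn.genericP ⟨Z, hZ, hne, fun _ _ hx => hx⟩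
  obtain ⟨g, hg, hgen⟩ := GenericAff.and h hZ
  obtain ⟨w, hw⟩ := exists_eval_ne_zero (mul_ne_zero hg (X_ne_zero (R := ℂ) 0))
  simp only [map_mul, eval_X] at hw
  have hw0 : w ≠ 0 := by
    rintro rfl
    simp at hw
  obtain ⟨himage, hnotMem⟩ := hgen w (left_ne_zero_of_mul hw)
  exact hnotMem hw0 (hsub (himage hw0))

lemma birationalOnto_univ {μ : RatMap n k} {A : Set (P n)} (ν : RatMap k n)
    (hleft : GenericOn A fun x => ν.toFun (μ.toFun x) = x)
    (hright : GenericOn Set.univ fun y => ν.toFun y ∈ A ∧ μ.toFun (ν.toFun y) = y) :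
    BirationalOnto μ A Set.univ := by
  refine ⟨dominantTo_univ_of_genericP ?_, ν, ?_, hright⟩
  · obtain ⟨g, hg, h⟩ := hright.genericP
    exact ⟨g, hg, fun v hv hv0 => ⟨_, (h v hv hv0).1, (h v hv hv0).2⟩⟩
  · obtain ⟨Z, hZ, hne, h⟩ := hleft
    exact ⟨Z, hZ, hne, fun x hx hxZ => ⟨trivial, h x hx hxZ⟩⟩

end RatMap

/-! ### The pentagonal model -/

section Model

variable {R : Type*} [CommRing R]

/-- The five quadrics `x_{i-1} x_{i+1} - x_0 x_i - x_0 ^ 2` cutting out the pentagonal model of the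
quintic del Pezzo surface. The coordinates of `ℙ⁵` other than `x_0` are indexed by `Fin 5`, whose
arithmetic is cyclic; the one with index `i` is `x i.succ`. -/
def quad (x : Fin 6 → R) (i : Fin 5) : R :=
  x (i + 1).succ * x (i + 4).succ - x 0 * x i.succ - x 0 ^ 2

/-- The linear syzygies between the five quadrics, as bilinear forms. -/
def syz (x : Fin 6 → R) (y : Fin 5 → R) (i : Fin 5) : R :=
  y (i + 4) * x (i + 2).succ - y (i + 1) * x (i + 3).succ + (y (i + 3) - y (i + 2)) * x 0

/-- The polar form of the quadrics. -/
def polar (a b : Fin 6 → R) : Fin 5 → R := quad (a + b) - quad a - quad b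

/-- The product of the coordinates. -/
def coordProd (y : Fin 5 → R) : R := ∏ i, y i

/-- The trace of the quadratic form cutting out the surface on a secant line. -/
def secTrace (y : Fin 5 → R) : R := ∑ i, y i * y (i + 2)

/-- The norm of the quadratic form cutting out the surface on a secant line. -/
def secNorm (y : Fin 5 → R) : R := ∑ i, y i ^ 2 * (y (i + 2) * y (i + 3))

/-- The quadratic form cutting out the surface on the secant line with parameter `y`. -/
def secForm (y : Fin 5 → R) (s t : R) : R :=
  t ^ 2 - secTrace y * t * s + secNorm y * s ^ 2

/-- The discriminant of `secForm`. -/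
def secDisc (y : Fin 5 → R) : R := secTrace y ^ 2 - 4 * secNorm y

/-- The point of the secant line with parameter `y` on the hyperplane `x_0 = 0`. -/
def secB (y : Fin 5 → R) : Fin 6 → R :=
  Fin.cons 0 fun i => y (i + 4) * y i * y (i + 1)

/-- A second point of the secant line with parameter `y`. -/
def secA (y : Fin 5 → R) : Fin 6 → R :=
  Fin.cons (coordProd y) fun i =>
    -(y (i + 4) * y i * y (i + 1) * (y (i + 1) * y (i + 3) + y (i + 2) * y (i + 4)))

lemma sum_univ_cyclic (f : Fin 5 → R) (i : Fin 5) :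
    ∑ j, f j = f i + f (i + 1) + f (i + 2) + f (i + 3) + f (i + 4) :=
  (Equiv.sum_comp (Equiv.addLeft i) f).symm.trans (by simp [Fin.sum_univ_five])

lemma prod_univ_cyclic (f : Fin 5 → R) (i : Fin 5) :
    ∏ j, f j = f i * f (i + 1) * f (i + 2) * f (i + 3) * f (i + 4) :=
  (Equiv.prod_comp (Equiv.addLeft i) f).symm.trans (by simp [Fin.prod_univ_five])

lemma syz_quad (x : Fin 6 → R) : syz x (quad x) = 0 := by
  ext i
  simp only [syz, quad, add_assoc, Fin.reduceAdd, add_zero, Pi.zero_apply]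
  ring

lemma syz_sub (x x' : Fin 6 → R) (y : Fin 5 → R) : syz (x - x') y = syz x y - syz x' y := by
  ext i
  simp only [syz, Pi.sub_apply]
  ring

lemma syz_smul (a : R) (x : Fin 6 → R) (y : Fin 5 → R) : syz (a • x) y = a • syz x y := by
  ext i
  simp only [syz, Pi.smul_apply, smul_eq_mul]
  ring

lemma syz_smul_right (a : R) (x : Fin 6 → R) (y : Fin 5 → R) : syz x (a • y) = a • syz x y := by
  ext i
  simp only [syz, Pi.smul_apply, smul_eq_mul]
  ring

lemma quad_linComb (a b : Fin 6 → R) (s t : R) :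
    quad (s • a + t • b) = s ^ 2 • quad a + t ^ 2 • quad b + (s * t) • polar a b := by
  ext i
  simp only [quad, polar, Pi.add_apply, Pi.sub_apply, Pi.smul_apply, smul_eq_mul]
  ring

lemma syz_polar (a b : Fin 6 → R) : syz a (polar a b) = -syz b (quad a) := by
  ext i
  simp only [syz, polar, quad, Pi.add_apply, Pi.sub_apply, Pi.neg_apply, add_assoc, Fin.reduceAdd,
    add_zero]
  ring

lemma syz_secA (y : Fin 5 → R) : syz (secA y) y = 0 := by
  ext i
  simp only [syz, secA, coordProd, prod_univ_cyclic y i, Fin.cons_succ, Fin.cons_zero, add_assoc,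
    Fin.reduceAdd, add_zero, Pi.zero_apply]
  ring

lemma quad_secant (y : Fin 5 → R) (s t : R) :
    quad (s • secA y + t • secB y) = (coordProd y * secForm y s t) • y := by
  ext i
  simp only [quad, secA, secB, coordProd, secForm, secTrace, secNorm, prod_univ_cyclic y i,
    sum_univ_cyclic _ i, Fin.cons_succ, Fin.cons_zero, Pi.add_apply, Pi.smul_apply, smul_eq_mul,
    add_assoc, Fin.reduceAdd, add_zero]
  ring

lemma map_quad {T : Type*} [CommRing T] (φ : R →+* T) (x : Fin 6 → R) (i : Fin 5) :
    φ (quad x i) = quad (fun k => φ (x k)) i := by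
  simp [quad]

@[simp]
lemma eval_quad_X (v : Fin 6 → R) (i : Fin 5) : eval v (quad X i) = quad v i := by
  simp [map_quad]

lemma isHomogeneous_quad {σ : Type*} {d : ℕ} {x : Fin 6 → MvPolynomial σ R}
    (hx : ∀ k, (x k).IsHomogeneous d) (i : Fin 5) : (quad x i).IsHomogeneous (d + d) := by
  rw [quad, sq]
  exact (((hx _).mul (hx _)).sub ((hx _).mul (hx _))).sub ((hx _).mul (hx _))

end Model

section Field

variable {K : Type*} [Field K] {x : Fin 6 → K} {y : Fin 5 → K}

lemma coordProd_ne_zero (h : coordProd y ≠ 0) (i : Fin 5) : y i ≠ 0 :=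
  Finset.prod_ne_zero_iff.mp h i (Finset.mem_univ i)

lemma syz_eq_zero_of_quad_eq_smul {c : K} (hc : c ≠ 0) (h : quad x = c • y) : syz x y = 0 := by
  have hsyz := syz_quad x
  rw [h, syz_smul_right] at hsyz
  exact (smul_eq_zero.mp hsyz).resolve_left hc

lemma exists_eq_smul_secB_of_syz (hy : coordProd y ≠ 0) (h : syz x y = 0) (h0 : x 0 = 0) :
    ∃ t : K, x = t • secB y := by
  have hne := coordProd_ne_zero hy
  let t (i : Fin 5) : K := x i.succ / (y (i + 4) * y i * y (i + 1))
  have hstep (i : Fin 5) : t (i + 1) = t i := by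
    have hi : y (i + 2) * x i.succ = y (i + 4) * x (i + 1).succ := by
      have hi := congrFun h (i + 3)
      simp only [syz, h0, add_assoc, Fin.reduceAdd, add_zero, mul_zero, Pi.zero_apply] at hi
      exact sub_eq_zero.mp hi
    simp only [t, add_assoc, Fin.reduceAdd, add_zero]
    rw [div_eq_div_iff (by simp [hne]) (by simp [hne])]
    linear_combination -(y i * y (i + 1)) * hi
  have hconst : ∀ i, t i = t 0 := Fin.induction rfl fun i ih => by
    rw [← Fin.coeSucc_eq_succ, hstep, ih]
  refine ⟨t 0, funext <| Fin.cases (by simp [h0, secB]) fun i => ?_⟩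
  rw [← hconst i]
  simp [secB, t, hne]

lemma exists_secant_of_syz (hy : coordProd y ≠ 0) (h : syz x y = 0) :
    ∃ s t : K, x = s • secA y + t • secB y := by
  have hsyz : syz (x - (x 0 / coordProd y) • secA y) y = 0 := by
    rw [syz_sub, syz_smul, syz_secA, h, smul_zero, sub_zero]
  obtain ⟨t, ht⟩ := exists_eq_smul_secB_of_syz hy hsyz (by simp [secA, hy])
  exact ⟨_, t, sub_eq_iff_eq_add'.mp ht⟩

lemma linearIndependent_secant (hy : coordProd y ≠ 0) :
    LinearIndependent K ![secA y, secB y] := by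
  rw [LinearIndependent.pair_iff]
  intro s t h
  have hs : s = 0 := by simpa [secA, secB, hy] using congrFun h 0
  subst hs
  simpa [secB, coordProd_ne_zero hy] using congrFun h (Fin.succ 0)

end Field

/-! ### The parametrization of the model by plane cubics -/

section Chart

variable {R : Type*} [CommRing R]

/-- The plane cubics through the coordinate points and `(1, 1, 1)`, in the basis in which they
parametrize the pentagonal model. -/
def planeCubic (w : Fin 3 → R) : Fin 6 → R :=
  ![w 0 * w 2 * (w 2 - w 1), w 0 ^ 2 * (w 1 - w 2), -(w 0 * (w 1 - w 2) ^ 2),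
    w 1 * w 2 * (w 1 - w 2), w 2 ^ 2 * (w 1 - w 0), w 0 * w 2 * (w 0 - w 2)]

lemma planeCubic_smul (a : R) (w : Fin 3 → R) : planeCubic (a • w) = a ^ 3 • planeCubic w := by
  ext k
  fin_cases k <;> simp [planeCubic] <;> ring

lemma map_planeCubic {T : Type*} [CommRing T] (φ : R →+* T) (w : Fin 3 → R) (k : Fin 6) :
    φ (planeCubic w k) = planeCubic (fun j => φ (w j)) k := by
  fin_cases k <;> simp [planeCubic]

lemma quad_planeCubic (w : Fin 3 → R) : quad (planeCubic w) = 0 := by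
  ext i
  fin_cases i <;> simp [quad, planeCubic] <;> ring

lemma planeCubic_of_quad_eq_zero {x : Fin 6 → R} (h : quad x = 0) :
    planeCubic ![-x 1, x 2 + x 0, x 0] = (x 1 * x 2) • x := by
  have h0 := congrFun h 0
  have h1 := congrFun h 1
  have h2 := congrFun h 2
  simp only [quad, Fin.reduceAdd, Fin.reduceSucc, Pi.zero_apply] at h0 h1 h2
  ext k
  fin_cases k <;> simp [planeCubic]
  · ring
  · ring
  · ring
  · linear_combination -x 2 * h1
  · linear_combination -x 1 * h2 - x 0 * h1
  · linear_combination -x 1 * h0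

lemma planeCubic_X_ne_zero [IsDomain R] (k : Fin 6) :
    planeCubic (X : Fin 3 → MvPolynomial (Fin 3) R) k ≠ 0 := by
  fin_cases k <;> simp [planeCubic, sub_eq_zero, X_inj]

/-- The rotation of the pentagon by `k` steps, acting on the indices of the coordinates. -/
def rot (k : Fin 5) : Fin 6 → Fin 6 := Fin.cons 0 fun i => (i + k).succ

lemma quad_comp_rot (x : Fin 6 → R) (k : Fin 5) : quad (x ∘ rot k) = fun i => quad x (i + k) := by
  ext i
  simp [quad, rot, add_right_comm]

lemma rot_comp_rot_neg (k : Fin 5) : rot k ∘ rot (-k) = id :=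
  funext <| Fin.cases rfl fun i => by simp [rot]

end Chart

section Vanishing

lemma eval_comp_eq_zero_of_forall_eval_ne_zero {K σ τ : Type*} [Field K] [Infinite K]
    {g : σ → MvPolynomial τ K} {f : MvPolynomial σ K} {k : MvPolynomial τ K} (hk : k ≠ 0)
    (h : ∀ u, eval u k ≠ 0 → eval (fun i => eval u (g i)) f = 0) (u : τ → K) :
    eval (fun i => eval u (g i)) f = 0 := by
  have hzero : aeval g f = 0 := by
    by_contra hne
    obtain ⟨u, hu⟩ := exists_eval_ne_zero (mul_ne_zero hne hk)
    rw [map_mul, eval_aeval] at hu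
    exact left_ne_zero_of_mul hu (h u (right_ne_zero_of_mul hu))
  rw [← eval_aeval, hzero, map_zero]

variable {K : Type*} [Field K] {d : ℕ} {f : MvPolynomial (Fin 6) K} {x : Fin 6 → K}

lemma eval_eq_zero_of_mul_ne_zero (hf : f.IsHomogeneous d)
    (hcubic : ∀ w, planeCubic w ≠ 0 → eval (planeCubic w) f = 0) (hx : quad x = 0)
    (h12 : x 1 * x 2 ≠ 0) : eval x f = 0 := by
  have hw := planeCubic_of_quad_eq_zero hx
  have hne : x ≠ 0 := by
    rintro rfl
    simp at h12
  have heval := hcubic _ (hw ▸ smul_ne_zero h12 hne)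
  rw [hw, eval_smul_of_isHomogeneous hf] at heval
  exact (mul_eq_zero.mp heval).resolve_left (pow_ne_zero _ h12)

lemma apply_zero_eq_zero_of_forall_mul_eq_zero (hx : quad x = 0)
    (h : ∀ k : Fin 5, x k.succ * x (k + 1).succ = 0) : x 0 = 0 := by
  by_contra h0
  have hnext {i : Fin 5} (hi : x i.succ = 0) : x (i + 1).succ * x (i + 4).succ ≠ 0 := by
    have hq := congrFun hx i
    simp only [quad, hi, mul_zero, sub_zero, Pi.zero_apply] at hq
    exact sub_eq_zero.mp hq ▸ pow_ne_zero 2 h0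
  obtain ⟨i, hi⟩ : ∃ i : Fin 5, x i.succ = 0 := (mul_eq_zero.mp (h 0)).elim (⟨_, ·⟩) (⟨_, ·⟩)
  have hi2 : x (i + 1 + 1).succ = 0 :=
    (mul_eq_zero.mp (h (i + 1))).resolve_left (left_ne_zero_of_mul (hnext hi))
  have hi3 := left_ne_zero_of_mul (hnext hi2)
  refine mul_ne_zero hi3 ?_ (h _)
  simpa only [add_assoc, Fin.reduceAdd] using right_ne_zero_of_mul (hnext hi)

lemma exists_adjacent_or_eq_vertex (hx : quad x = 0) :
    (∃ k : Fin 5, x k.succ * x (k + 1).succ ≠ 0) ∨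
      ∃ (k : Fin 5) (a : K), x = Fin.cons 0 (Pi.single k a) := by
  refine or_iff_not_imp_left.mpr fun h => ?_
  push Not at h
  have h0 := apply_zero_eq_zero_of_forall_mul_eq_zero hx h
  by_cases hzero : ∀ k : Fin 5, x k.succ = 0
  · exact ⟨0, 0, funext <| Fin.cases h0 fun i => by simp [hzero]⟩
  push Not at hzero
  obtain ⟨k, hk⟩ := hzero
  have hq (i : Fin 5) : x (i + 1).succ * x (i + 4).succ = 0 := by
    simpa [quad, h0] using congrFun hx i
  have h1 := h k
  have h2 := hq (k + 1)
  have h3 := hq (k + 4)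
  have h4 := h (k + 4)
  simp only [add_assoc, Fin.reduceAdd, add_zero, mul_eq_zero, hk, false_or, or_false]
    at h1 h2 h3 h4
  refine ⟨k, x k.succ, funext <| Fin.cases h0 fun i => ?_⟩
  obtain ⟨j, rfl⟩ : ∃ j, i = k + j := ⟨i - k, by simp⟩
  fin_cases j <;> simp [h1, h2, h3, h4]

variable [Infinite K]

lemma eval_planeCubic_comp_rot (hf : f.IsHomogeneous d)
    (hcubic : ∀ w, planeCubic w ≠ 0 → eval (planeCubic w) f = 0) (k : Fin 5) (w : Fin 3 → K) :
    eval (planeCubic w ∘ rot k) f = 0 := by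
  have hne : planeCubic (X : Fin 3 → MvPolynomial (Fin 3) K) (rot k 1) *
      planeCubic X (rot k 2) ≠ 0 := mul_ne_zero (planeCubic_X_ne_zero _) (planeCubic_X_ne_zero _)
  have h := eval_comp_eq_zero_of_forall_eval_ne_zero (g := fun i => planeCubic X (rot k i))
    (f := f) hne (fun u hu => ?_) w
  · simpa [map_planeCubic, Function.comp_def] using h
  · simp only [map_mul, map_planeCubic, eval_X] at hu ⊢
    exact eval_eq_zero_of_mul_ne_zero hf hcubic (x := planeCubic u ∘ rot k)
      (by rw [quad_comp_rot, quad_planeCubic]; rfl) hu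

lemma eval_vertex_eq_zero (hf : f.IsHomogeneous d)
    (hcubic : ∀ w, planeCubic w ≠ 0 → eval (planeCubic w) f = 0) (a : K) :
    eval (Fin.cons 0 (Pi.single 0 a)) f = 0 := by
  have h := eval_comp_eq_zero_of_forall_eval_ne_zero
    (g := (![0, X 0, X 1, 0, 0, 0] : Fin 6 → MvPolynomial (Fin 2) K)) (f := f)
    (k := X 0 * X 1) (by simp) (fun u hu => ?_) ![a, 0]
  · refine Eq.trans (congrArg (eval · f) (funext <| Fin.cases (by simp) fun i => ?_)) h
    rw [Fin.cons_succ]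
    fin_cases i <;> simp
  · refine eval_eq_zero_of_mul_ne_zero hf hcubic ?_ (by simpa using hu)
    ext i
    fin_cases i <;> simp [quad]

lemma eval_eq_zero_of_quad_eq_zero (hf : f.IsHomogeneous d)
    (hcubic : ∀ w, planeCubic w ≠ 0 → eval (planeCubic w) f = 0) (hx : quad x = 0) :
    eval x f = 0 := by
  have hrot (k : Fin 5) (h : eval (x ∘ rot k) (rename (rot (-k)) f) = 0) : eval x f = 0 := by
    rwa [eval_rename, Function.comp_assoc, rot_comp_rot_neg, Function.comp_id] at h
  have hrename (k : Fin 5) : (rename (rot k) f).IsHomogeneous d ∧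
      ∀ w, planeCubic w ≠ 0 → eval (planeCubic w) (rename (rot k) f) = 0 :=
    ⟨hf.rename_isHomogeneous, fun w _ => by
      rw [eval_rename]
      exact eval_planeCubic_comp_rot hf hcubic k w⟩
  obtain ⟨k, hk⟩ | ⟨k, a, rfl⟩ := exists_adjacent_or_eq_vertex hx
  · refine hrot k (eval_eq_zero_of_mul_ne_zero (hrename _).1 (hrename _).2 ?_ ?_)
    · rw [quad_comp_rot, hx]
      rfl
    · change x (0 + k).succ * x (1 + k).succ ≠ 0
      rwa [zero_add, add_comm 1 k]
  · have hvertex : (Fin.cons 0 (Pi.single k a) : Fin 6 → K) ∘ rot k =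
        Fin.cons 0 (Pi.single 0 a) :=
      funext <| Fin.cases rfl fun i => by simp [rot, Pi.single_apply]
    refine hrot k ?_
    rw [hvertex]
    exact eval_vertex_eq_zero (hrename _).1 (hrename _).2 a

end Vanishing

/-! ### Forms of low degree -/

section Euler

variable {K σ : Type*} [Field K] [CharZero K] {d : ℕ} {f : MvPolynomial σ K}

lemma exists_eval_eq_sum_mul_eval [Fintype σ] (hf : f.IsHomogeneous (d + 1)) :
    ∃ g : σ → MvPolynomial σ K, (∀ i, (g i).IsHomogeneous d) ∧
      ∀ x, eval x f = ∑ i, x i * eval x (g i) := by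
  have hd : (d + 1 : K) ≠ 0 := d.cast_add_one_ne_zero
  refine ⟨fun i => C (d + 1 : K)⁻¹ * pderiv i f, fun i => hf.pderiv.C_mul _, fun x => ?_⟩
  have heuler := congrArg (eval x) hf.sum_X_mul_pderiv
  simp only [map_sum, map_mul, eval_X, nsmul_eq_mul, map_add, map_natCast, map_one,
    Nat.cast_add_one] at heuler
  refine mul_left_cancel₀ hd (heuler.symm.trans ?_)
  rw [Finset.mul_sum]
  refine Finset.sum_congr rfl fun i _ => ?_
  rw [map_mul, eval_C]
  field_simp

lemma exists_eval_eq_dotProduct [Fintype σ] (hf : f.IsHomogeneous 1) :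
    ∃ c : σ → K, ∀ x, eval x f = x ⬝ᵥ c := by
  obtain ⟨g, hg, h⟩ := exists_eval_eq_sum_mul_eval hf
  refine ⟨fun i => eval 0 (g i), fun x => (h x).trans (Finset.sum_congr rfl fun i _ => ?_)⟩
  simpa using congrArg (x i * ·) (eval_smul_of_isHomogeneous (hg i) 0 x).symm

lemma exists_eval_eq_sum_mul_dotProduct [Fintype σ] (hf : f.IsHomogeneous 2) :
    ∃ T : σ → σ → K, ∀ x, eval x f = ∑ i, x i * (x ⬝ᵥ T i) := by
  obtain ⟨g, hg, h⟩ := exists_eval_eq_sum_mul_eval hf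
  choose T hT using fun i => exists_eval_eq_dotProduct (hg i)
  exact ⟨T, fun x => by simp only [h, hT]⟩

lemma eval_linComb_of_linear [Finite σ] (hf : f.IsHomogeneous 1) (a b : σ → K) (s t : K) :
    eval (s • a + t • b) f = s * eval a f + t * eval b f := by
  cases nonempty_fintype σ
  obtain ⟨c, hc⟩ := exists_eval_eq_dotProduct hf
  simp only [hc, add_dotProduct, smul_dotProduct, smul_eq_mul]

lemma exists_eval_linComb_of_quadratic [Finite σ] (hf : f.IsHomogeneous 2) (a b : σ → K) :
    ∃ c : K, ∀ s t, eval (s • a + t • b) f = s ^ 2 * eval a f + s * t * c + t ^ 2 * eval b f := by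
  cases nonempty_fintype σ
  obtain ⟨g, hg, h⟩ := exists_eval_eq_sum_mul_eval hf
  refine ⟨∑ i, (a i * eval b (g i) + b i * eval a (g i)), fun s t => ?_⟩
  rw [h, h a, h b]
  simp only [eval_linComb_of_linear (hg _), Finset.mul_sum, ← Finset.sum_add_distrib]
  refine Finset.sum_congr rfl fun i _ => ?_
  simp only [Pi.add_apply, Pi.smul_apply, smul_eq_mul]
  ring

lemma exists_eval_linComb_of_cubic [Finite σ] (hf : f.IsHomogeneous 3) (a b : σ → K) :
    ∃ c e : K, ∀ s t, eval (s • a + t • b) f =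
      s ^ 3 * eval a f + s ^ 2 * t * c + s * t ^ 2 * e + t ^ 3 * eval b f := by
  cases nonempty_fintype σ
  obtain ⟨g, hg, h⟩ := exists_eval_eq_sum_mul_eval hf
  choose m hm using fun i => exists_eval_linComb_of_quadratic (hg i) a b
  refine ⟨∑ i, (a i * m i + b i * eval a (g i)), ∑ i, (a i * eval b (g i) + b i * m i),
    fun s t => ?_⟩
  rw [h, h a, h b]
  simp only [hm, Finset.mul_sum, ← Finset.sum_add_distrib]
  refine Finset.sum_congr rfl fun i _ => ?_
  simp only [Pi.add_apply, Pi.smul_apply, smul_eq_mul]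
  ring

end Euler

/-! ### The quadrics through the model -/

section Quadrics

variable {K : Type*} [Field K] [CharZero K]

lemma eq_zero_of_forall_dotProduct_planeCubic {c : Fin 6 → K}
    (h : ∀ w, planeCubic w 0 ≠ 0 → c ⬝ᵥ planeCubic w = 0) : c = 0 := by
  have hpoint (u v : K) := h ![1, u, v]
  simp only [dotProduct, Fin.sum_univ_six, planeCubic, Matrix.cons_val] at hpoint
  have h0 := hpoint 0 1 (by norm_num)
  have h1 := hpoint 0 (-1) (by norm_num)
  have h2 := hpoint (-1) 1 (by norm_num)
  have h3 := hpoint (-1) 2 (by norm_num)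
  have h4 := hpoint 1 (-1) (by norm_num)
  have h5 := hpoint 1 2 (by norm_num)
  ext k
  fin_cases k <;> simp <;> grind

lemma exists_eval_eq_mul_add_sum_quad {f : MvPolynomial (Fin 6) K} (hf : f.IsHomogeneous 2) :
    ∃ (l : Fin 6 → K) (a e c : Fin 5 → K), ∀ x, eval x f = x 0 * (l ⬝ᵥ x) +
      ∑ i : Fin 5, (a i * x i.succ ^ 2 + e i * (x i.succ * x (i + 1).succ) + c i * quad x i) := by
  obtain ⟨T, hT⟩ := exists_eval_eq_sum_mul_dotProduct hf
  let c (i : Fin 5) : K :=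
    T (i + 1).succ (i + 4).succ + T (i + 4).succ (i + 1).succ
  refine ⟨Fin.cons (T 0 0 + ∑ i, c i) fun i => T 0 i.succ + T i.succ 0 + c i,
    fun i => T i.succ i.succ, fun i => T i.succ (i + 1).succ + T (i + 1).succ i.succ, c,
    fun x => ?_⟩
  rw [hT]
  simp only [dotProduct, Fin.sum_univ_succ (n := 5), Fin.cons_zero, Fin.cons_succ]
  simp only [c, quad, Fin.sum_univ_five, Fin.reduceAdd]
  ring

lemma exists_eq_sum_smul_quad {f : MvPolynomial (Fin 6) K} (hf : f.IsHomogeneous 2)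
    (h : ∀ x, quad x = 0 → eval x f = 0) : ∃ c : Fin 5 → K, f = ∑ j, c j • quad X j := by
  obtain ⟨l, a, e, c, hfx⟩ := exists_eval_eq_mul_add_sum_quad hf
  have hedge (k : Fin 5) (s t : K) : a k * s ^ 2 + (e k * (s * t) + a (k + 1) * t ^ 2) = 0 := by
    let z (i : Fin 5) : K := ![s, t, 0, 0, 0] (i - k)
    have hz (j : Fin 5) : z (k + j) = ![s, t, 0, 0, 0] j := by simp [z]
    have hz0 : z k = s := by simp [z]
    have hquad : quad (Fin.cons 0 z : Fin 6 → K) = 0 := by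
      ext i
      obtain ⟨j, rfl⟩ : ∃ j, i = k + j := ⟨i - k, by simp⟩
      fin_cases j <;> simp [quad, add_assoc, hz, hz0]
    have heval := h _ hquad
    rw [hfx, hquad, sum_univ_cyclic _ k] at heval
    simpa [add_assoc, hz, hz0] using heval
  have ha (i : Fin 5) : a i = 0 := by simpa using hedge i 1 0
  have he (i : Fin 5) : e i = 0 := by simpa [ha] using hedge i 1 1
  have hl : l = 0 := by
    refine eq_zero_of_forall_dotProduct_planeCubic fun w hw => ?_
    have heval := h _ (quad_planeCubic w)
    simpa [hfx, ha, he, quad_planeCubic, hw] using heval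
  refine ⟨c, MvPolynomial.funext fun x => ?_⟩
  simp [hfx, ha, he, hl, smul_eval]

end Quadrics

/-! ### Adapted coordinates -/

section Coordinates

variable {K V ι : Type*} [Field K] [AddCommGroup V] [Module K V] [Finite ι]

lemma exists_frame_coordinates [DecidableEq ι] (B : Module.Basis ι K V) {w : V}
    (hw : ∀ i, B.repr w i ≠ 0) :
    ∃ A : V ≃ₗ[K] (ι → K), A w = 1 ∧ ∀ i, ∃ a, A (B i) = Pi.single i a := by
  cases nonempty_fintype ι
  refine ⟨(B.unitsSMul fun i => Units.mk0 _ (hw i)).equivFun, ?_, fun i => ⟨(B.repr w i)⁻¹, ?_⟩⟩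
  · ext i
    simp [Module.Basis.repr_unitsSMul, Units.smul_def, hw]
  · ext j
    obtain rfl | hj := eq_or_ne j i
    · simp [Module.Basis.repr_unitsSMul, Units.smul_def]
    · simp [Module.Basis.repr_unitsSMul, hj]

lemma exists_linearEquiv_of_mem_span {b q : ι → V} (hq : LinearIndependent K q)
    (h : ∀ j, q j ∈ Submodule.span K (Set.range b)) :
    ∃ E : (ι → K) ≃ₗ[K] (ι → K), ∀ φ : V →ₗ[K] K, E (fun i => φ (b i)) = fun j => φ (q j) := by
  classical
  cases nonempty_fintype ι
  choose D hD using fun j => Submodule.mem_span_range_iff_exists_fun K |>.mp (h j)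
  have hunit : IsUnit (Matrix.of D) := by
    rw [← Matrix.vecMul_injective_iff_isUnit]
    refine (injective_iff_map_eq_zero (Matrix.of D).vecMulLinear).mpr fun c hc => ?_
    refine funext (Fintype.linearIndependent_iff.mp hq c ?_)
    have hc (i : ι) : ∑ j, c j * D j i = 0 := congrFun hc i
    simp_rw [← hD, Finset.smul_sum, smul_smul]
    rw [Finset.sum_comm]
    simp_rw [← Finset.sum_smul, hc, zero_smul, Finset.sum_const_zero]
  refine ⟨.ofInjectiveEndo (Matrix.of D).mulVecLin (Matrix.mulVec_injective_iff_isUnit.mpr hunit),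
    fun φ => funext fun j => ?_⟩
  rw [← hD, map_sum]
  simp_rw [map_smul]
  rfl

end Coordinates

section PlaneCubic

variable {R : Type*} [CommRing R]

lemma planeCubic_single (i : Fin 3) (a : R) : planeCubic (Pi.single i a) = 0 := by
  ext k
  fin_cases i <;> fin_cases k <;> simp [planeCubic]

lemma planeCubic_one : planeCubic (1 : Fin 3 → R) = 0 := by
  ext k
  fin_cases k <;> simp [planeCubic]

lemma isHomogeneous_planeCubic_X (k : Fin 6) :
    (planeCubic (X : Fin 3 → MvPolynomial (Fin 3) R) k).IsHomogeneous 3 := by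
  have hX := isHomogeneous_X R (σ := Fin 3)
  fin_cases k
  · exact ((hX 0).mul (hX 2)).mul ((hX 2).sub (hX 1))
  · exact ((hX 0).pow 2).mul ((hX 1).sub (hX 2))
  · exact ((hX 0).mul (((hX 1).sub (hX 2)).pow 2)).neg
  · exact ((hX 1).mul (hX 2)).mul ((hX 1).sub (hX 2))
  · exact ((hX 2).pow 2).mul ((hX 1).sub (hX 0))
  · exact ((hX 0).mul (hX 2)).mul ((hX 0).sub (hX 2))

lemma linearIndependent_planeCubic_X {K : Type*} [Field K] [CharZero K] :
    LinearIndependent K (planeCubic (X : Fin 3 → MvPolynomial (Fin 3) K)) := by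
  refine Fintype.linearIndependent_iff.mpr fun c hc => congrFun ?_
  refine eq_zero_of_forall_dotProduct_planeCubic fun w _ => ?_
  simpa [smul_eval, map_planeCubic, dotProduct] using congrArg (eval w) hc

end PlaneCubic

section Surface

variable {p : Fin 4 → P 2} {b : Fin 6 → MvPolynomial (Fin 3) ℂ}

lemma exists_plane_coordinates (hp : GeneralPosition₄ p) :
    ∃ A : (Fin 3 → ℂ) ≃ₗ[ℂ] (Fin 3 → ℂ), ∀ i, planeCubic (A (p i).rep) = 0 := by
  have hlin : LinearIndependent ℂ fun i : Fin 3 => (p i.castSucc).rep := by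
    convert hp 0 1 2 (by decide) (by decide) (by decide) using 1
    ext i : 1
    fin_cases i <;> rfl
  let B := basisOfLinearIndependentOfCardEqFinrank hlin (by simp)
  have hB (i : Fin 3) : B i = (p i.castSucc).rep := by simp [B]
  have hrepr (i : Fin 3) : B.repr (p 3).rep i ≠ 0 := by
    intro hi
    obtain ⟨h1, h2, h12⟩ : 3 ≠ (i + 1).castSucc ∧ 3 ≠ (i + 2).castSucc ∧
        (i + 1).castSucc ≠ (i + 2).castSucc := by
      fin_cases i <;> decide
    have hnotMem := (linearIndependent_finCons.mp (hp _ _ _ h1 h2 h12)).2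
    rw [Matrix.range_cons_cons_empty, ← hB, ← hB, ← Set.image_pair, B.mem_span_image] at hnotMem
    refine hnotMem fun j hj => ?_
    have hji : j ≠ i := by
      rintro rfl
      exact Finsupp.mem_support_iff.mp hj hi
    have hpair : ∀ i j : Fin 3, j ≠ i → j = i + 1 ∨ j = i + 2 := by decide
    exact hpair i j hji
  obtain ⟨A, hA, hAB⟩ := exists_frame_coordinates B hrepr
  refine ⟨A, Fin.lastCases ?_ fun i => ?_⟩
  · exact (congrArg planeCubic hA).trans planeCubic_one
  · obtain ⟨a, ha⟩ := hAB i
    rw [← hB, ha, planeCubic_single]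

lemma exists_space_coordinates (hp : GeneralPosition₄ p)
    (hb : Submodule.span ℂ (Set.range b) = linSys {x : P 2 | ∃ i, x = p i} 3 1) :
    ∃ (A : (Fin 3 → ℂ) ≃ₗ[ℂ] (Fin 3 → ℂ)) (E : (Fin 6 → ℂ) ≃ₗ[ℂ] (Fin 6 → ℂ)),
      ∀ v, E (fun i => eval v (b i)) = planeCubic (A v) := by
  obtain ⟨A, hA⟩ := exists_plane_coordinates hp
  let q (j : Fin 6) : MvPolynomial (Fin 3) ℂ := pullback A.toLinearMap (planeCubic X j)
  have hqv (v : Fin 3 → ℂ) (j : Fin 6) : eval v (q j) = planeCubic (A v) j := by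
    simp [q, map_planeCubic]
  have hq : LinearIndependent ℂ q := by
    refine linearIndependent_planeCubic_X.map' (pullback A.toLinearMap).toLinearMap
      (LinearMap.ker_eq_bot.mpr (Function.LeftInverse.injective (g := pullback A.symm.toLinearMap)
        (pullback_pullback_symm A.symm)))
  have hmem (j : Fin 6) : q j ∈ Submodule.span ℂ (Set.range b) := by
    rw [hb, mem_linSys_one]
    refine ⟨isHomogeneous_pullback _ (isHomogeneous_planeCubic_X j), ?_⟩
    rintro x ⟨i, rfl⟩
    rw [hqv, hA, Pi.zero_apply]
  obtain ⟨E, hE⟩ := exists_linearEquiv_of_mem_span hq hmem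
  exact ⟨A, E, fun v => (hE (aeval v).toLinearMap).trans (funext (hqv v))⟩

/-- The quintic del Pezzo surface given by the five quadrics `quad` in the linear coordinates
`E`. -/
def pentagonalSurface (E : (Fin 6 → ℂ) ≃ₗ[ℂ] (Fin 6 → ℂ)) : Set (P 5) :=
  {x | quad (E x.rep) = 0}

variable {E : (Fin 6 → ℂ) ≃ₗ[ℂ] (Fin 6 → ℂ)}

lemma isHomogeneous_pullback_quad (E : (Fin 6 → ℂ) ≃ₗ[ℂ] (Fin 6 → ℂ)) (j : Fin 5) :
    (pullback E.toLinearMap (quad X j)).IsHomogeneous 2 :=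
  isHomogeneous_pullback _ (isHomogeneous_quad (isHomogeneous_X ℂ) j)

lemma mk_mem_pentagonalSurface {v : Fin 6 → ℂ} (hv : v ≠ 0) :
    Projectivization.mk ℂ v hv ∈ pentagonalSurface E ↔ quad (E v) = 0 := by
  have h (j : Fin 5) := eval_mk_rep_eq_zero_iff (isHomogeneous_pullback_quad E j) hv
  simp only [eval_pullback, eval_quad_X] at h
  simpa [pentagonalSurface, funext_iff] using forall_congr' h

lemma pAlgSet_pentagonalSurface : PAlgSet (pentagonalSurface E) := by
  refine ⟨Set.range fun j => pullback E.toLinearMap (quad X j), ?_, ?_⟩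
  · rintro _ ⟨j, rfl⟩
    exact ⟨2, isHomogeneous_pullback_quad E j⟩
  · ext x
    simp [pentagonalSurface, funext_iff]

lemma planarImage_eq_pentagonalSurface {A : (Fin 3 → ℂ) ≃ₗ[ℂ] (Fin 3 → ℂ)}
    (hE : ∀ v, E (fun i => eval v (b i)) = planeCubic (A v)) :
    planarImage b = pentagonalSurface E := by
  refine subset_antisymm (Set.sInter_subset_of_mem ⟨pAlgSet_pentagonalSurface, ?_⟩) fun x hx => ?_
  · rintro _ ⟨w, h, rfl⟩
    rw [mk_mem_pentagonalSurface, hE, quad_planeCubic]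
  rintro _ ⟨⟨I, hI, rfl⟩, hsub⟩ f hf
  obtain ⟨d, hd⟩ := hI f hf
  have heval (v : Fin 6 → ℂ) : eval v f = eval (E v) (pullback E.symm.toLinearMap f) := by simp
  rw [heval]
  refine eval_eq_zero_of_quad_eq_zero (isHomogeneous_pullback _ hd) (fun u hu => ?_) hx
  have hv : A.symm u ≠ 0 := by
    intro h
    refine hu ?_
    rw [A.symm.map_eq_zero_iff.mp h, ← Pi.single_zero 0, planeCubic_single]
  obtain ⟨a, ha⟩ := Projectivization.exists_smul_eq_mk_rep ℂ (A.symm u) hv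
  have hrep : E (fun i => eval (Projectivization.mk ℂ (A.symm u) hv).rep (b i)) =
      (a : ℂ) ^ 3 • planeCubic u := by
    rw [hE, ← ha, Units.smul_def, map_smul, A.apply_symm_apply, planeCubic_smul]
  have ha0 : (a : ℂ) ^ 3 ≠ 0 := pow_ne_zero _ a.ne_zero
  have hne : (fun i => eval (Projectivization.mk ℂ (A.symm u) hv).rep (b i)) ≠ 0 := by
    rw [← E.map_ne_zero_iff, hrep]
    exact smul_ne_zero ha0 hu
  have hzero := (eval_mk_rep_eq_zero_iff hd hne).mp (hsub ⟨_, hne, rfl⟩ f hf)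
  rw [heval, hrep, eval_smul_of_isHomogeneous (isHomogeneous_pullback _ hd)] at hzero
  exact (mul_eq_zero.mp hzero).resolve_left (pow_ne_zero _ ha0)

lemma exists_planarImage_eq_pentagonalSurface (hp : GeneralPosition₄ p)
    (hb : Submodule.span ℂ (Set.range b) = linSys {x : P 2 | ∃ i, x = p i} 3 1) :
    ∃ E, planarImage b = pentagonalSurface E := by
  obtain ⟨A, E, hE⟩ := exists_space_coordinates hp hb
  exact ⟨E, planarImage_eq_pentagonalSurface hE⟩

end Surface

/-! ### The congruence of secant lines -/

section Lines

variable {n : ℕ} {W : Submodule ℂ (Fin (n + 1) → ℂ)} {a b : P n}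

lemma mk_mem_projLinear {v : Fin (n + 1) → ℂ} (hv : v ≠ 0) :
    Projectivization.mk ℂ v hv ∈ projLinear W ↔ v ∈ W := by
  rw [projLinear, Set.mem_ofPred_eq, Projectivization.submodule_mk,
    Submodule.span_singleton_le_iff_mem]

lemma mem_projLinear : a ∈ projLinear W ↔ a.rep ∈ W := by
  rw [← mk_mem_projLinear a.rep_nonzero, a.mk_rep]

lemma span_rep_pair_eq (hW : Module.finrank ℂ W = 2) (hab : a ≠ b) (ha : a ∈ projLinear W)
    (hb : b ∈ projLinear W) : Submodule.span ℂ {a.rep, b.rep} = W := by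
  have hind := Projectivization.independent_iff.mp
    ((Projectivization.independent_pair_iff_ne a b).mpr hab)
  have hcard := finrank_span_eq_card hind
  rw [Set.range_comp, Matrix.range_cons_cons_empty, Set.image_pair] at hcard
  refine Submodule.eq_of_le_of_finrank_eq ?_ (by rw [hcard, hW, Fintype.card_fin])
  rw [Submodule.span_le, Set.pair_subset_iff]
  exact ⟨mem_projLinear.mp ha, mem_projLinear.mp hb⟩

lemma _root_.IsLine.eq_of_mem {L L' : Set (P n)} (hL : IsLine L) (hL' : IsLine L') (hab : a ≠ b)
    (ha : a ∈ L) (hb : b ∈ L) (ha' : a ∈ L') (hb' : b ∈ L') : L = L' := by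
  obtain ⟨W, hW, rfl⟩ := hL
  obtain ⟨W', hW', rfl⟩ := hL'
  rw [← span_rep_pair_eq hW hab ha hb, span_rep_pair_eq hW' hab ha' hb']

lemma _root_.IsLine.isSecantLine {L S : Set (P n)} (hL : IsLine L) {u v : Fin (n + 1) → ℂ}
    (huv : LinearIndependent ℂ ![u, v])
    (huL : Projectivization.mk ℂ u (huv.ne_zero 0) ∈ L)
    (hvL : Projectivization.mk ℂ v (huv.ne_zero 1) ∈ L)
    (huS : Projectivization.mk ℂ u (huv.ne_zero 0) ∈ S)
    (hvS : Projectivization.mk ℂ v (huv.ne_zero 1) ∈ S) : IsSecantLine L S := by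
  refine ⟨hL, _, ⟨huL, huS⟩, _, ⟨hvL, hvS⟩, fun h => ?_⟩
  obtain ⟨a, ha⟩ := (Projectivization.mk_eq_mk_iff' ℂ _ _ _ _).mp h
  exact one_ne_zero (LinearIndependent.pair_iff.mp huv 1 (-a) (by simp [← ha])).1

end Lines

section SecantSpace

variable {K : Type*} [Field K] {E : (Fin 6 → K) ≃ₗ[K] (Fin 6 → K)} {y : Fin 5 → K} {w : Fin 6 → K}

/-- The affine cone over the secant line with parameter `y`, in the coordinates `E`. -/
def secantSpace (E : (Fin 6 → K) ≃ₗ[K] (Fin 6 → K)) (y : Fin 5 → K) : Submodule K (Fin 6 → K) :=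
  (Submodule.span K {secA y, secB y}).map E.symm.toLinearMap

lemma mem_secantSpace : w ∈ secantSpace E y ↔ ∃ s t : K, s • secA y + t • secB y = E w := by
  rw [secantSpace, Submodule.mem_map_equiv, Submodule.mem_span_pair]
  rfl

lemma mem_secantSpace_of_syz (hy : coordProd y ≠ 0) (h : syz (E w) y = 0) :
    w ∈ secantSpace E y := by
  obtain ⟨s, t, hst⟩ := exists_secant_of_syz hy h
  exact mem_secantSpace.mpr ⟨s, t, hst.symm⟩

lemma finrank_secantSpace (E : (Fin 6 → K) ≃ₗ[K] (Fin 6 → K)) (hy : coordProd y ≠ 0) :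
    Module.finrank K (secantSpace E y) = 2 := by
  have h := finrank_span_eq_card (linearIndependent_secant hy)
  rw [Matrix.range_cons_cons_empty] at h
  rw [secantSpace, LinearEquiv.finrank_map_eq, h, Fintype.card_fin]

lemma exists_roots_secForm [IsAlgClosed K] [NeZero (2 : K)] (hd : secDisc y ≠ 0) :
    ∃ r r' : K, r ≠ r' ∧ secForm y 1 r = 0 ∧ secForm y 1 r' = 0 := by
  have h2 : (2 : K) ≠ 0 := two_ne_zero
  obtain ⟨d, hd2⟩ := IsAlgClosed.exists_pow_nat_eq (secDisc y) two_pos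
  have hd0 : d ≠ 0 := by
    rintro rfl
    exact hd (by rw [← hd2, zero_pow two_ne_zero])
  rw [secDisc] at hd2
  refine ⟨(secTrace y + d) / 2, (secTrace y - d) / 2, fun h => hd0 ?_, ?_, ?_⟩
  · field_simp at h
    exact (mul_eq_zero.mp (by linear_combination h : 2 * d = 0)).resolve_left h2
  · rw [secForm]
    field_simp
    linear_combination hd2
  · rw [secForm]
    field_simp
    linear_combination hd2

lemma mem_secantSpace_quad_of_secant {a b : Fin 6 → K} (ha : quad (E a) = 0) (hb : quad (E b) = 0)
    {s t : K} (hy : coordProd (quad (E (s • a + t • b))) ≠ 0) :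
    a ∈ secantSpace E (quad (E (s • a + t • b))) := by
  have hsyz : syz (E a) (polar (E a) (E b)) = 0 := by
    rw [syz_polar, ha, neg_eq_zero]
    simpa using syz_smul_right 0 (E b) 0
  refine mem_secantSpace_of_syz hy ?_
  rw [map_add, map_smul, map_smul, quad_linComb, ha, hb, smul_zero, smul_zero, zero_add, zero_add,
    syz_smul_right, hsyz, smul_zero]

end SecantSpace

section Congruence

variable {E : (Fin 6 → ℂ) ≃ₗ[ℂ] (Fin 6 → ℂ)} {y : Fin 5 → ℂ} {v : Fin 6 → ℂ}

lemma mk_mem_projLinear_secantSpace_quad (hv : v ≠ 0) (hy : coordProd (quad (E v)) ≠ 0) :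
    Projectivization.mk ℂ v hv ∈ projLinear (secantSpace E (quad (E v))) :=
  (mk_mem_projLinear hv).mpr (mem_secantSpace_of_syz hy (syz_quad _))

lemma isLine_secantSpace (hy : coordProd y ≠ 0) : IsLine (projLinear (secantSpace E y)) :=
  ⟨_, finrank_secantSpace E hy, rfl⟩

lemma isSecantLine_secantSpace (hy : coordProd y ≠ 0) (hd : secDisc y ≠ 0) :
    IsSecantLine (projLinear (secantSpace E y)) (pentagonalSurface E) := by
  obtain ⟨r, r', hr, h, h'⟩ := exists_roots_secForm hd
  obtain ⟨u, hu⟩ := E.surjective ((1 : ℂ) • secA y + r • secB y)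
  obtain ⟨v, hv⟩ := E.surjective ((1 : ℂ) • secA y + r' • secB y)
  have hind : LinearIndependent ℂ ![u, v] := by
    refine LinearIndependent.of_comp E.toLinearMap ?_
    have hcomp : E.toLinearMap ∘ ![u, v] = ![E u, E v] :=
      funext <| Fin.forall_fin_two.mpr ⟨rfl, rfl⟩
    rw [hcomp, hu, hv, LinearIndependent.pair_add_smul_add_smul_iff]
    exact ⟨linearIndependent_secant hy, by simpa using hr.symm⟩
  refine (isLine_secantSpace hy).isSecantLine hind ?_ ?_ ?_ ?_
  · exact (mk_mem_projLinear _).mpr (mem_secantSpace.mpr ⟨1, r, hu.symm⟩)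
  · exact (mk_mem_projLinear _).mpr (mem_secantSpace.mpr ⟨1, r', hv.symm⟩)
  · exact (mk_mem_pentagonalSurface _).mpr (by rw [hu, quad_secant, h, mul_zero, zero_smul])
  · exact (mk_mem_pentagonalSurface _).mpr (by rw [hv, quad_secant, h', mul_zero, zero_smul])

lemma eq_projLinear_secantSpace (hv : v ≠ 0) (hy : coordProd (quad (E v)) ≠ 0) {L : Set (P 5)}
    (hL : IsSecantLine L (pentagonalSurface E)) (hvL : Projectivization.mk ℂ v hv ∈ L) :
    L = projLinear (secantSpace E (quad (E v))) := by
  obtain ⟨⟨W, hW, rfl⟩, a, ⟨haW, haS⟩, b, ⟨hbW, hbS⟩, hab⟩ := hL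
  rw [mk_mem_projLinear, ← span_rep_pair_eq hW hab haW hbW, Submodule.mem_span_pair] at hvL
  obtain ⟨s, t, rfl⟩ := hvL
  have ha := mem_secantSpace_quad_of_secant haS hbS hy
  have hb : b.rep ∈ secantSpace E (quad (E (s • a.rep + t • b.rep))) := by
    rw [add_comm (s • _)] at hy ⊢
    exact mem_secantSpace_quad_of_secant hbS haS hy
  refine IsLine.eq_of_mem ⟨W, hW, rfl⟩ (isLine_secantSpace hy) hab haW hbW ?_ ?_
  · exact mem_projLinear.mpr ha
  · exact mem_projLinear.mpr hb

@[simp]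
lemma eval_coordProd_X (y : Fin 5 → ℂ) :
    eval y (coordProd (X : Fin 5 → MvPolynomial (Fin 5) ℂ)) = coordProd y := by
  simp [coordProd]

@[simp]
lemma eval_secDisc_X (y : Fin 5 → ℂ) :
    eval y (secDisc (X : Fin 5 → MvPolynomial (Fin 5) ℂ)) = secDisc y := by
  simp [secDisc, secTrace, secNorm]

lemma genericP_of_coordProd_secDisc_ne_zero {Φ : P 5 → Prop}
    (h : ∀ v (hv : v ≠ 0), coordProd (quad (E v)) ≠ 0 → secDisc (quad (E v)) ≠ 0 →
      Φ (Projectivization.mk ℂ v hv)) : GenericP Φ := by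
  let g : MvPolynomial (Fin 6) ℂ :=
    pullback E.toLinearMap (aeval (quad X) (coordProd X * secDisc X : MvPolynomial (Fin 5) ℂ))
  have hg (v : Fin 6 → ℂ) :
      eval v g = coordProd (quad (E v)) * secDisc (quad (E v)) := by
    simp only [g, eval_pullback, eval_aeval, eval_quad_X, map_mul, eval_coordProd_X, eval_secDisc_X]
    rfl
  have hone : quad (secB (1 : Fin 5 → ℂ)) = 1 := by
    simpa [coordProd, secForm] using quad_secant (1 : Fin 5 → ℂ) 0 1
  refine ⟨g, ne_zero_of_eval_ne_zero (v := E.symm (secB 1)) ?_, fun v hv hv0 => ?_⟩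
  · rw [hg, E.apply_symm_apply, hone]
    norm_num [coordProd, secDisc, secTrace, secNorm]
  · rw [hg] at hv
    exact h v hv0 (left_ne_zero_of_mul hv) (right_ne_zero_of_mul hv)

lemma genericP_existsUnique_isSecantLine (E : (Fin 6 → ℂ) ≃ₗ[ℂ] (Fin 6 → ℂ)) :
    GenericP fun z : P 5 => ∃! L, IsSecantLine L (pentagonalSurface E) ∧ z ∈ L :=
  genericP_of_coordProd_secDisc_ne_zero fun _ hv hy hd =>
    ⟨_, ⟨isSecantLine_secantSpace hy hd, mk_mem_projLinear_secantSpace_quad hv hy⟩,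
      fun _ hL => eq_projLinear_secantSpace hv hy hL.1 hL.2⟩

end Congruence

/-! ### The map defined by the quadrics -/

section Quadrics

variable {K : Type*} [Field K]

lemma exists_quad_eq_single (i : Fin 5) : ∃ x : Fin 6 → K, quad x = Pi.single i 1 := by
  refine ⟨Fin.cons 0 (Pi.single (i + 1) 1 + Pi.single (i + 4) 1), funext fun j => ?_⟩
  simp only [quad, Fin.cons_succ, Fin.cons_zero, Pi.add_apply, Pi.single_apply]
  fin_cases i <;> fin_cases j <;> simp

lemma linearIndependent_pullback_quad (E : (Fin 6 → K) ≃ₗ[K] (Fin 6 → K)) :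
    LinearIndependent K fun j => pullback E.toLinearMap (quad X j) := by
  rw [Fintype.linearIndependent_iff]
  intro c hc i
  obtain ⟨x, hx⟩ := exists_quad_eq_single (K := K) i
  simpa [smul_eval, hx, Pi.single_apply] using congrArg (eval (E.symm x)) hc

end Quadrics

section QuadricMap

variable {E : (Fin 6 → ℂ) ≃ₗ[ℂ] (Fin 6 → ℂ)}

lemma pullback_symm_eval_eq_zero {d : ℕ} {f : MvPolynomial (Fin 6) ℂ} (hd : d ≠ 0)
    (hf : f ∈ linSys (pentagonalSurface E) d 1) {x : Fin 6 → ℂ} (hx : quad x = 0) :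
    eval x (pullback E.symm.toLinearMap f) = 0 := by
  obtain ⟨hfd, hfS⟩ := mem_linSys_one.mp hf
  rw [eval_pullback, LinearEquiv.coe_coe]
  obtain rfl | hx0 := eq_or_ne x 0
  · simpa [hd] using eval_smul_of_isHomogeneous hfd 0 (E.symm 0)
  · have hv : E.symm x ≠ 0 := E.symm.map_ne_zero_iff.mpr hx0
    rw [← eval_mk_rep_eq_zero_iff hfd hv]
    exact hfS _ ((mk_mem_pentagonalSurface hv).mpr (by rwa [E.apply_symm_apply]))

lemma pullback_mem_linSys {d : ℕ} {f : MvPolynomial (Fin 6) ℂ} (hf : f.IsHomogeneous d)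
    (h : ∀ x, quad x = 0 → eval x f = 0) :
    pullback E.toLinearMap f ∈ linSys (pentagonalSurface E) d 1 :=
  mem_linSys_one.mpr ⟨isHomogeneous_pullback _ hf, fun x hx => by
    rw [eval_pullback]
    exact h _ hx⟩

lemma linSys_two_eq_span : linSys (pentagonalSurface E) 2 1 =
    Submodule.span ℂ (Set.range fun j => pullback E.toLinearMap (quad X j)) := by
  refine le_antisymm (fun f hf => ?_) (Submodule.span_le.mpr ?_)
  · obtain ⟨c, hc⟩ := exists_eq_sum_smul_quad
      (isHomogeneous_pullback E.symm.toLinearMap (mem_linSys_one.mp hf).1)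
      fun x => pullback_symm_eval_eq_zero two_ne_zero hf
    refine (Submodule.mem_span_range_iff_exists_fun ℂ).mpr ⟨c, ?_⟩
    rw [← pullback_pullback_symm E f, hc]
    simp only [map_sum, map_smul]
  · rintro _ ⟨j, rfl⟩
    exact pullback_mem_linSys (isHomogeneous_quad (isHomogeneous_X ℂ) j) fun x hx => by
      rw [eval_quad_X, hx, Pi.zero_apply]

lemma finrank_linSys_two : Module.finrank ℂ (linSys (pentagonalSurface E) 2 1) = 5 := by
  rw [linSys_two_eq_span, finrank_span_eq_card (linearIndependent_pullback_quad E),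
    Fintype.card_fin]

variable {μ : RatMap 5 4}

lemma exists_target_coordinates (hμ : LinearIndependent ℂ μ.g)
    (hspan : Submodule.span ℂ (Set.range μ.g) = linSys (pentagonalSurface E) 2 1) :
    ∃ U : (Fin 5 → ℂ) ≃ₗ[ℂ] (Fin 5 → ℂ), ∀ v, μ.lift v = U (quad (E v)) := by
  obtain ⟨U, hU⟩ := exists_linearEquiv_of_mem_span
    (b := fun j => pullback E.toLinearMap (quad X j)) hμ fun j => by
      rw [← linSys_two_eq_span, ← hspan]
      exact Submodule.subset_span (Set.mem_range_self j)
  refine ⟨U, fun v => ?_⟩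
  have h := hU (aeval v).toLinearMap
  simp only [AlgHom.toLinearMap_apply, aeval_eq_eval, eval_pullback, eval_quad_X] at h
  exact h.symm

variable {U : (Fin 5 → ℂ) ≃ₗ[ℂ] (Fin 5 → ℂ)} (hμ : ∀ v, μ.lift v = U (quad (E v)))

include hμ

lemma fibre_eq {v : Fin 6 → ℂ} (hv : v ≠ 0) (hy : coordProd (quad (E v)) ≠ 0) :
    {w : P 5 | w ∉ pentagonalSurface E ∧
        μ.toFun w = μ.toFun (Projectivization.mk ℂ v hv)} =
      projLinear (secantSpace E (quad (E v))) \ pentagonalSurface E := by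
  have hlift {w : Fin 6 → ℂ} (hw : quad (E w) ≠ 0) : μ.lift w ≠ 0 := by
    rw [hμ]
    exact U.map_ne_zero_iff.mpr hw
  have hvq : quad (E v) ≠ 0 := fun h => coordProd_ne_zero hy 0 (congrFun h 0)
  ext w
  induction w using Projectivization.ind with
  | h w hw =>
    rw [Set.mem_ofPred_eq, Set.mem_sdiff, and_comm]
    refine and_congr_left fun hwS => ?_
    rw [mk_mem_pentagonalSurface] at hwS
    simp only [μ.toFun_mk hw (hlift hwS), μ.toFun_mk hv (hlift hvq),
      Projectivization.mk_eq_mk_iff', mk_mem_projLinear, hμ, ← map_smul, U.injective.eq_iff]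
    constructor
    · rintro ⟨a, ha⟩
      refine mem_secantSpace_of_syz hy (syz_eq_zero_of_quad_eq_smul (c := a) ?_ ha.symm)
      rintro rfl
      exact hwS (by rw [← ha, zero_smul])
    · intro h
      obtain ⟨s, t, hst⟩ := mem_secantSpace.mp h
      exact ⟨_, by rw [← hst, quad_secant]⟩

lemma genericP_fibre : GenericP fun z : P 5 =>
    ∃ L : Set (P 5), IsSecantLine L (pentagonalSurface E) ∧ z ∈ L ∧
      {w : P 5 | w ∉ pentagonalSurface E ∧ μ.toFun w = μ.toFun z} =
        L \ pentagonalSurface E :=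
  genericP_of_coordProd_secDisc_ne_zero fun _ hv hy hd =>
    ⟨_, isSecantLine_secantSpace hy hd, mk_mem_projLinear_secantSpace_quad hv hy,
      fibre_eq hμ hv hy⟩

lemma dominantTo_univ : DominantTo μ Set.univ Set.univ := by
  refine dominantTo_univ_of_genericP ⟨pullback U.symm.toLinearMap (coordProd X),
    ne_zero_of_eval_ne_zero (v := U 1) (by simp [coordProd]), fun y hy hy0 => ?_⟩
  rw [eval_pullback, LinearEquiv.coe_coe, eval_coordProd_X] at hy
  obtain ⟨v, hv⟩ := E.surjective (secB (U.symm y))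
  have hquad : quad (E v) = coordProd (U.symm y) • U.symm y := by
    simpa [hv, secForm] using quad_secant (U.symm y) 0 1
  have hlift : μ.lift v = coordProd (U.symm y) • y := by
    rw [hμ, hquad, map_smul, U.apply_symm_apply]
  have hv0 : v ≠ 0 := by
    rintro rfl
    have hB := congrFun hv (Fin.succ 0)
    simp [secB, coordProd_ne_zero hy] at hB
  exact ⟨_, trivial, RatMap.toFun_mk_of_lift_eq_smul hv0 hy0 hy hlift⟩

end QuadricMap

/-! ### The residual intersection of a secant line with a cubic -/

section Residual

variable {K R : Type*} [CommRing K] [CommRing R] [Algebra K R]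

/-- The point where the cubic `f` through the surface residually meets the secant line with
parameter `y`. The product of `secNorm y` with the restriction of `f` to this line is `secForm y`
times a linear form, and the coordinates are read off from the latter. -/
def residual (f : MvPolynomial (Fin 6) K) (y : Fin 5 → R) : Fin 6 → R :=
  (secNorm y * aeval (secB y) f) • secA y + (-aeval (secA y) f) • secB y

/-- The polynomial whose nonvanishing at `y` guarantees that the secant line with parameter `y`
meets the surface in two distinct points and the cubic `f` in a third one, `residual f y`. -/
def residualCond (f : MvPolynomial (Fin 6) K) (y : Fin 5 → R) : R :=
  coordProd y * secDisc y * secNorm y *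
    secForm y (secNorm y * aeval (secB y) f) (-aeval (secA y) f)

section Map

variable {T : Type*} [CommRing T] [Algebra K T] (φ : R →ₐ[K] T) (f : MvPolynomial (Fin 6) K)
  (y : Fin 5 → R)

lemma map_secNorm : φ (secNorm y) = secNorm fun i => φ (y i) := by simp [secNorm]

lemma map_secTrace : φ (secTrace y) = secTrace fun i => φ (y i) := by simp [secTrace]

lemma map_secA : (fun k => φ (secA y k)) = secA fun i => φ (y i) :=
  funext <| Fin.cases (by simp [secA, coordProd]) fun i => by simp [secA]

lemma map_secB : (fun k => φ (secB y k)) = secB fun i => φ (y i) :=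
  funext <| Fin.cases (by simp [secB]) fun i => by simp [secB]

lemma map_residual (k : Fin 6) : φ (residual f y k) = residual f (fun i => φ (y i)) k := by
  simp only [residual, Pi.add_apply, Pi.smul_apply, smul_eq_mul, map_add, map_mul, map_neg,
    ← map_secA, ← map_secB, ← map_secNorm, comp_aeval_apply]

lemma map_residualCond : φ (residualCond f y) = residualCond f fun i => φ (y i) := by
  simp only [residualCond, secDisc, coordProd, secForm, map_add, map_sub, map_mul, map_neg, map_pow,
    map_prod, map_ofNat, comp_aeval_apply, map_secA, map_secB, map_secNorm, map_secTrace]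

end Map

section Homogeneous

variable {f : MvPolynomial (Fin 6) K} {d : ℕ}

local notation "𝐗" => (X : Fin 5 → MvPolynomial (Fin 5) K)

lemma isHomogeneous_coordProd : (coordProd 𝐗).IsHomogeneous 5 :=
  IsHomogeneous.prod Finset.univ X (fun _ => 1) fun i _ => isHomogeneous_X K i

lemma isHomogeneous_secTrace : (secTrace 𝐗).IsHomogeneous 2 :=
  IsHomogeneous.sum _ _ _ fun _ _ => (isHomogeneous_X K _).mul (isHomogeneous_X K _)

lemma isHomogeneous_secNorm : (secNorm 𝐗).IsHomogeneous 4 :=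
  IsHomogeneous.sum _ _ _ fun _ _ =>
    ((isHomogeneous_X K _).pow 2).mul ((isHomogeneous_X K _).mul (isHomogeneous_X K _))

lemma isHomogeneous_secDisc : (secDisc 𝐗).IsHomogeneous 4 :=
  (isHomogeneous_secTrace.pow 2).sub ((isHomogeneous_C (Fin 5) (4 : K)).mul isHomogeneous_secNorm)

lemma isHomogeneous_X_mul_X_mul_X (i j k : Fin 5) : (𝐗 i * X j * X k).IsHomogeneous 3 :=
  ((isHomogeneous_X K i).mul (isHomogeneous_X K j)).mul (isHomogeneous_X K k)

lemma isHomogeneous_secB : ∀ k, (secB 𝐗 k).IsHomogeneous 3 :=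
  Fin.cases (isHomogeneous_zero _ _ _) fun _ => isHomogeneous_X_mul_X_mul_X _ _ _

lemma isHomogeneous_secA : ∀ k, (secA 𝐗 k).IsHomogeneous 5 :=
  Fin.cases isHomogeneous_coordProd fun _ =>
    ((isHomogeneous_X_mul_X_mul_X _ _ _).mul
      (((isHomogeneous_X K _).mul (isHomogeneous_X K _)).add
        ((isHomogeneous_X K _).mul (isHomogeneous_X K _)))).neg

lemma isHomogeneous_residual (hf : f.IsHomogeneous 3) (k : Fin 6) :
    (residual f 𝐗 k).IsHomogeneous 18 :=
  ((isHomogeneous_secNorm.mul (hf.aeval _ isHomogeneous_secB)).mul (isHomogeneous_secA k)).add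
    ((hf.aeval _ isHomogeneous_secA).neg.mul (isHomogeneous_secB k))

lemma isHomogeneous_residualCond (hf : f.IsHomogeneous 3) :
    (residualCond f 𝐗).IsHomogeneous 43 := by
  have hA := (hf.aeval _ (isHomogeneous_secA (K := K))).neg
  have hB := isHomogeneous_secNorm.mul (hf.aeval _ (isHomogeneous_secB (K := K)))
  exact ((isHomogeneous_coordProd.mul isHomogeneous_secDisc).mul isHomogeneous_secNorm).mul
    (((hA.pow 2).sub ((isHomogeneous_secTrace.mul hA).mul hB)).add
      (isHomogeneous_secNorm.mul (hB.pow 2)))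

end Homogeneous

end Residual

section ResidualPoint

variable {K : Type*} [Field K] {f : MvPolynomial (Fin 6) K} {y : Fin 5 → K}

lemma exists_eq_mul_of_mul_eq_mul {p q s t : K} (hst : ¬(s = 0 ∧ t = 0)) (h : p * t = q * s) :
    ∃ c, p = c * s ∧ q = c * t := by
  by_cases hs : s = 0
  · have ht : t ≠ 0 := fun ht => hst ⟨hs, ht⟩
    exact ⟨q / t, by simpa [hs, ht] using h, by field_simp⟩
  · exact ⟨p / s, by field_simp, by field_simp; rw [h]⟩

lemma residual_eq : residual f y =
    (secNorm y * eval (secB y) f) • secA y + (-eval (secA y) f) • secB y := by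
  simp only [residual, aeval_eq_eval]

lemma residualCond_eq : residualCond f y = coordProd y * secDisc y * secNorm y *
    secForm y (secNorm y * eval (secB y) f) (-eval (secA y) f) := by
  simp only [residualCond, aeval_eq_eval]

lemma eval_residual_X (k : Fin 6) :
    eval y (residual f (X : Fin 5 → MvPolynomial (Fin 5) K) k) = residual f y k := by
  simpa [aeval_eq_eval] using map_residual (aeval y) f X k

lemma eval_residualCond (g : Fin 5 → MvPolynomial (Fin 6) K) (x : Fin 6 → K) :
    eval x (residualCond f g) = residualCond f fun i => eval x (g i) := by
  simpa [aeval_eq_eval] using map_residualCond (aeval x) f g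

lemma eval_residualCond_X :
    eval y (residualCond f (X : Fin 5 → MvPolynomial (Fin 5) K)) = residualCond f y := by
  simpa [aeval_eq_eval] using map_residualCond (aeval y) f X

lemma residualCond_smul (hf : f.IsHomogeneous 3) (a : K) :
    residualCond f (a • y) = a ^ 43 * residualCond f y := by
  rw [← eval_residualCond_X, eval_smul_of_isHomogeneous (isHomogeneous_residualCond hf),
    eval_residualCond_X]

lemma coordProd_ne_zero_of_residualCond (hy : residualCond f y ≠ 0) : coordProd y ≠ 0 :=
  left_ne_zero_of_mul (left_ne_zero_of_mul (left_ne_zero_of_mul hy))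

lemma ne_zero_of_residualCond (hy : residualCond f y ≠ 0) : y ≠ 0 := fun h =>
  coordProd_ne_zero (coordProd_ne_zero_of_residualCond hy) 0 (congrFun h 0)

lemma exists_quad_residual_eq_smul (hy : residualCond f y ≠ 0) :
    ∃ c : K, c ≠ 0 ∧ quad (residual f y) = c • y :=
  ⟨_, mul_ne_zero (coordProd_ne_zero_of_residualCond hy) (right_ne_zero_of_mul hy),
    quad_secant _ _ _⟩

lemma residual_ne_zero (hy : residualCond f y ≠ 0) : residual f y ≠ 0 := by
  intro h
  obtain ⟨c, hc, hquad⟩ := exists_quad_residual_eq_smul hy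
  refine smul_ne_zero hc (ne_zero_of_residualCond hy) (hquad.symm.trans (funext fun i => ?_))
  simp [h, quad]

variable [IsAlgClosed K] [CharZero K]

lemma secNorm_mul_eval_secant (hf : f.IsHomogeneous 3) (hfQ : ∀ x, quad x = 0 → eval x f = 0)
    (hd : secDisc y ≠ 0) (s t : K) :
    secNorm y * eval (s • secA y + t • secB y) f =
      secForm y s t * (secNorm y * eval (secB y) f * t + eval (secA y) f * s) := by
  obtain ⟨c, e, h⟩ := exists_eval_linComb_of_cubic hf (secA y) (secB y)
  obtain ⟨r, r', hr, hform, hform'⟩ := exists_roots_secForm hd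
  have hroot {r : K} (hr : secForm y 1 r = 0) : eval ((1 : K) • secA y + r • secB y) f = 0 :=
    hfQ _ (by rw [quad_secant, hr, mul_zero, zero_smul])
  have hcubic := hroot hform
  have hcubic' := hroot hform'
  rw [h] at hcubic hcubic'
  rw [h]
  generalize eval (secA y) f = a at *
  generalize eval (secB y) f = b at *
  rw [secForm] at hform hform' ⊢
  have hr0 := sub_ne_zero.mpr hr
  have htrace : secTrace y = r + r' := mul_left_cancel₀ hr0 (by linear_combination hform' - hform)
  have hnorm : secNorm y = r * r' := by linear_combination hform + r * htrace
  have hc : c = r * r' * b - (r + r') * (e + (r + r') * b) :=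
    mul_left_cancel₀ hr0 (by linear_combination hcubic - hcubic')
  have ha : a = r * r' * (e + (r + r') * b) :=
    mul_left_cancel₀ hr0 (by linear_combination r * hcubic' - r' * hcubic)
  rw [htrace, hnorm, ha, hc]
  ring

variable (hf : f.IsHomogeneous 3) (hfQ : ∀ x, quad x = 0 → eval x f = 0)

include hf hfQ

lemma eval_residual (hy : residualCond f y ≠ 0) : eval (residual f y) f = 0 := by
  simp only [residualCond_eq, mul_ne_zero_iff] at hy
  obtain ⟨⟨⟨-, hd⟩, hnorm⟩, -⟩ := hy
  refine (mul_eq_zero.mp ?_).resolve_left hnorm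
  rw [residual_eq, secNorm_mul_eval_secant hf hfQ hd]
  ring

lemma exists_residual_quad_eq_smul {x : Fin 6 → K} (hx : eval x f = 0)
    (hy : residualCond f (quad x) ≠ 0) : ∃ c : K, c ≠ 0 ∧ residual f (quad x) = c • x := by
  simp only [residualCond_eq, mul_ne_zero_iff] at hy
  obtain ⟨⟨⟨hprod, hd⟩, -⟩, hform⟩ := hy
  obtain ⟨s, t, hst⟩ := exists_secant_of_syz hprod (syz_quad x)
  have hst0 : secForm (quad x) s t ≠ 0 := by
    intro h0
    have hquad := quad_secant (quad x) s t
    rw [← hst, h0, mul_zero, zero_smul] at hquad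
    exact coordProd_ne_zero hprod 0 (congrFun hquad 0)
  have hlin := secNorm_mul_eval_secant hf hfQ hd s t
  rw [← hst, hx, mul_zero, eq_comm, mul_eq_zero] at hlin
  obtain ⟨c, hs, ht⟩ := exists_eq_mul_of_mul_eq_mul (s := s) (t := t)
    (p := secNorm (quad x) * eval (secB (quad x)) f) (q := -eval (secA (quad x)) f)
    (fun h => hst0 (by simp [h, secForm]))
    (by linear_combination hlin.resolve_left hst0)
  refine ⟨c, ?_, ?_⟩
  · rintro rfl
    exact hform (by simp [hs, ht, secForm])
  · rw [residual_eq, hs, ht, mul_smul, mul_smul, ← smul_add, ← hst]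

end ResidualPoint

/-! ### The inverse map -/

section Birational

variable {E : (Fin 6 → ℂ) ≃ₗ[ℂ] (Fin 6 → ℂ)} {U : (Fin 5 → ℂ) ≃ₗ[ℂ] (Fin 5 → ℂ)} {μ : RatMap 5 4}
  {f : MvPolynomial (Fin 6) ℂ}

/-- The map sending `y` to the residual intersection of the corresponding secant line with the
cubic `f`, in the coordinates `E` and `U`. -/
def inverseMap (E : (Fin 6 → ℂ) ≃ₗ[ℂ] (Fin 6 → ℂ)) (U : (Fin 5 → ℂ) ≃ₗ[ℂ] (Fin 5 → ℂ))
    (hf : f.IsHomogeneous 3) : RatMap 4 5 where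
  d := 18
  g i := pullback U.symm.toLinearMap
    (∑ k, C (E.symm (Pi.single k 1) i) * residual f (X : Fin 5 → MvPolynomial (Fin 5) ℂ) k)
  homog _ := isHomogeneous_pullback _ <| IsHomogeneous.sum _ _ _ fun k _ =>
    (isHomogeneous_residual hf k).C_mul _

lemma lift_inverseMap (hf : f.IsHomogeneous 3) (y : Fin 5 → ℂ) :
    (inverseMap E U hf).lift y = E.symm (residual f (U.symm y)) := by
  ext i
  rw [pi_eq_sum_univ' (residual f (U.symm y)), map_sum]
  simp [RatMap.lift, inverseMap, eval_residual_X, mul_comm]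

lemma mk_mem_hypersurface_pullback {d : ℕ} (hf : f.IsHomogeneous d) {v : Fin 6 → ℂ} (hv : v ≠ 0) :
    Projectivization.mk ℂ v hv ∈ hypersurface (pullback E.toLinearMap f) ↔ eval (E v) f = 0 := by
  rw [hypersurface, Set.mem_ofPred_eq, eval_mk_rep_eq_zero_iff (isHomogeneous_pullback _ hf),
    eval_pullback, LinearEquiv.coe_coe]

variable (hμ : ∀ v, μ.lift v = U (quad (E v))) (hf : f.IsHomogeneous 3)
  (hfQ : ∀ x, quad x = 0 → eval x f = 0)

include hμ hf hfQ

lemma inverseMap_toFun_toFun {v : Fin 6 → ℂ} (hv : v ≠ 0) (hvf : eval (E v) f = 0)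
    (hy : residualCond f (quad (E v)) ≠ 0) :
    (inverseMap E U hf).toFun (μ.toFun (Projectivization.mk ℂ v hv)) =
      Projectivization.mk ℂ v hv := by
  obtain ⟨c, hc, hres⟩ := exists_residual_quad_eq_smul hf hfQ hvf hy
  have hne : U (quad (E v)) ≠ 0 := U.map_ne_zero_iff.mpr (ne_zero_of_residualCond hy)
  rw [RatMap.toFun_mk_of_lift_eq_smul hv hne one_ne_zero (by rw [hμ, one_smul])]
  refine RatMap.toFun_mk_of_lift_eq_smul hne hv hc ?_
  rw [lift_inverseMap, U.symm_apply_apply, hres, map_smul, E.symm_apply_apply]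

lemma toFun_inverseMap_toFun {y : Fin 5 → ℂ} (hy0 : y ≠ 0)
    (hy : residualCond f (U.symm y) ≠ 0) :
    (inverseMap E U hf).toFun (Projectivization.mk ℂ y hy0) ∈
        hypersurface (pullback E.toLinearMap f) ∧
      μ.toFun ((inverseMap E U hf).toFun (Projectivization.mk ℂ y hy0)) =
        Projectivization.mk ℂ y hy0 := by
  obtain ⟨c, hc, hquad⟩ := exists_quad_residual_eq_smul hy
  have hne : E.symm (residual f (U.symm y)) ≠ 0 := E.symm.map_ne_zero_iff.mpr (residual_ne_zero hy)
  rw [RatMap.toFun_mk_of_lift_eq_smul hy0 hne one_ne_zero (by rw [lift_inverseMap, one_smul])]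
  constructor
  · rw [mk_mem_hypersurface_pullback hf, E.apply_symm_apply]
    exact eval_residual hf hfQ hy
  · refine RatMap.toFun_mk_of_lift_eq_smul hne hy0 hc ?_
    rw [hμ, E.apply_symm_apply, hquad, map_smul, U.apply_symm_apply]

variable {y : Fin 5 → ℂ} (hy : residualCond f y ≠ 0)

include hy

lemma genericOn_inverseMap_toFun_toFun : GenericOn (hypersurface (pullback E.toLinearMap f))
    fun x => (inverseMap E U hf).toFun (μ.toFun x) = x := by
  have heval (v : Fin 6 → ℂ) :
      eval v (pullback E.toLinearMap (residualCond f (quad X))) = residualCond f (quad (E v)) := by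
    simp [eval_residualCond]
  have hhom : (residualCond f (quad (X : Fin 6 → MvPolynomial (Fin 6) ℂ))).IsHomogeneous
      (2 * 43) := by
    simpa [map_residualCond] using
      (isHomogeneous_residualCond hf).aeval (quad X) (isHomogeneous_quad (isHomogeneous_X ℂ))
  refine genericOn_of_eval_ne_zero (isHomogeneous_pullback E.toLinearMap hhom)
    ⟨E.symm (residual f y), E.symm.map_ne_zero_iff.mpr (residual_ne_zero hy), ?_, ?_⟩
    fun v hv hvf hne => ?_
  · rw [mk_mem_hypersurface_pullback hf, E.apply_symm_apply]
    exact eval_residual hf hfQ hy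
  · obtain ⟨c, hc, hquad⟩ := exists_quad_residual_eq_smul hy
    rw [heval, E.apply_symm_apply, hquad, residualCond_smul hf]
    exact mul_ne_zero (pow_ne_zero _ hc) hy
  · rw [heval] at hne
    exact inverseMap_toFun_toFun hμ hf hfQ hv ((mk_mem_hypersurface_pullback hf hv).mp hvf) hne

lemma genericOn_toFun_inverseMap_toFun : GenericOn Set.univ fun z =>
    (inverseMap E U hf).toFun z ∈ hypersurface (pullback E.toLinearMap f) ∧
      μ.toFun ((inverseMap E U hf).toFun z) = z := by
  have heval (z : Fin 5 → ℂ) :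
      eval z (pullback U.symm.toLinearMap (residualCond f X)) = residualCond f (U.symm z) := by
    simp [eval_residualCond_X]
  refine genericOn_of_eval_ne_zero
    (isHomogeneous_pullback U.symm.toLinearMap (isHomogeneous_residualCond hf))
    ⟨U y, U.map_ne_zero_iff.mpr (ne_zero_of_residualCond hy), trivial, ?_⟩ fun z hz _ hne => ?_
  · rwa [heval, U.symm_apply_apply]
  · rw [heval] at hne
    exact toFun_inverseMap_toFun hμ hf hfQ hz hne

lemma birationalOnto_of_residualCond :
    BirationalOnto μ (hypersurface (pullback E.toLinearMap f)) Set.univ :=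
  birationalOnto_univ (inverseMap E U hf) (genericOn_inverseMap_toFun_toFun hμ hf hfQ hy)
    (genericOn_toFun_inverseMap_toFun hμ hf hfQ hy)

end Birational

section GenericCubic

variable {E : (Fin 6 → ℂ) ≃ₗ[ℂ] (Fin 6 → ℂ)} {U : (Fin 5 → ℂ) ≃ₗ[ℂ] (Fin 5 → ℂ)} {μ : RatMap 5 4}

lemma residualCond_one {K : Type*} [Field K] (f : MvPolynomial (Fin 6) K) :
    residualCond f (1 : Fin 5 → K) = 25 * (eval (secA 1) f ^ 2 +
      25 * eval (secA 1) f * eval (secB 1) f + 125 * eval (secB 1) f ^ 2) := by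
  have htrace : secTrace (1 : Fin 5 → K) = 5 := by
    norm_num [secTrace]
  have hnorm : secNorm (1 : Fin 5 → K) = 5 := by
    norm_num [secNorm]
  have hdisc : secDisc (1 : Fin 5 → K) = 5 := by
    norm_num [secDisc, htrace, hnorm]
  have hprod : coordProd (1 : Fin 5 → K) = 1 := by
    simp [coordProd]
  rw [residualCond_eq, hprod, hdisc, secForm, htrace, hnorm]
  ring

lemma genericInSystem_birationalOnto (hμ : ∀ v, μ.lift v = U (quad (E v))) :
    GenericInSystem (linSys (pentagonalSurface E) 3 1) fun F =>
      BirationalOnto μ (hypersurface F) Set.univ := by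
  intro N ψ hψ
  have hmem (c : Fin N → ℂ) : ψ c ∈ linSys (pentagonalSurface E) 3 1 :=
    hψ ▸ LinearMap.mem_range_self ψ c
  let value (x : Fin 6 → ℂ) : MvPolynomial (Fin N) ℂ :=
    linForm ((aeval (E.symm x)).toLinearMap ∘ₗ ψ)
  let g : MvPolynomial (Fin N) ℂ := 25 * (value (secA 1) ^ 2 +
    25 * value (secA 1) * value (secB 1) + 125 * value (secB 1) ^ 2)
  have hg (c : Fin N → ℂ) :
      eval c g = residualCond (pullback E.symm.toLinearMap (ψ c)) (1 : Fin 5 → ℂ) := by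
    simp [g, value, residualCond_one, aeval_eq_eval]
  obtain ⟨c₀, hc₀⟩ : pullback E.toLinearMap ((2 * X 0 + X 1) * quad X 0) ∈ LinearMap.range ψ := by
    rw [hψ]
    have hX := isHomogeneous_X ℂ (σ := Fin 6)
    refine pullback_mem_linSys ((((hX 0).C_mul 2).add (hX 1)).mul (isHomogeneous_quad hX 0))
      fun x hx => ?_
    rw [map_mul, eval_quad_X, hx, Pi.zero_apply, mul_zero]
  refine ⟨g, ne_zero_of_eval_ne_zero (v := c₀) ?_, fun c hc => ?_⟩
  · have hA : 2 * secA (1 : Fin 5 → ℂ) 0 + secA 1 1 = 0 := by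
      norm_num [secA, coordProd]
    have hB : 2 * secB (1 : Fin 5 → ℂ) 0 + secB 1 1 = 1 := by
      simp [secB]
    have hquad : quad (secB (1 : Fin 5 → ℂ)) 0 = 1 := by
      simp only [quad, secB, Fin.cons_zero, Fin.cons_succ]
      simp
    rw [hg, hc₀, residualCond_one]
    simp [hA, hB, hquad]
  · rw [hg] at hc
    simpa only [pullback_pullback_symm] using birationalOnto_of_residualCond hμ
      (isHomogeneous_pullback E.symm.toLinearMap (mem_linSys_one.mp (hmem c)).1)
      (fun x => pullback_symm_eval_eq_zero three_ne_zero (hmem c)) hc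

end GenericCubic

/-! ### Smoothness is an open condition -/

section Macaulay

lemma homogeneousComponent_mul_of_isHomogeneous {R σ : Type*} [CommSemiring R]
    (a : MvPolynomial σ R) {f : MvPolynomial σ R} {e : ℕ} (hf : f.IsHomogeneous e) (k : ℕ) :
    homogeneousComponent (k + e) (a * f) = homogeneousComponent k a * f := by
  let : GradedAlgebra (homogeneousSubmodule σ R) := gradedAlgebra
  have h := DirectSum.coe_decompose_mul_add_of_right_mem (homogeneousSubmodule σ R) (i := k)
    (a := a) (b := f) hf
  rw [← decomposition.decompose'_apply, ← decomposition.decompose'_apply]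
  exact h

variable {R σ ι : Type*} [CommRing R] [Fintype σ] [DecidableEq σ]

variable (σ) in
/-- The exponents of the monomials of degree `D`. -/
abbrev Exponents (D : ℕ) : Type _ :=
  (Finset.univ.finsuppAntidiag D : Finset (σ →₀ ℕ))

lemma Exponents.degree_eq {D : ℕ} (m : Exponents σ D) : m.1.degree = D := by
  rw [Finsupp.degree_eq_sum, (Finset.mem_finsuppAntidiag.mp m.2).1]

lemma eval_homogeneousComponent (D : ℕ) (f : MvPolynomial σ R) (v : σ → R) :
    eval v (homogeneousComponent D f) =
      ∑ m : Exponents σ D, coeff m.1 f * ∏ i, v i ^ m.1 i := by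
  rw [Finset.sum_coe_sort _ fun m => coeff m f * ∏ i, v i ^ m i, homogeneousComponent_apply,
    map_sum]
  simp only [eval_monomial, Finsupp.prod_pow]
  refine Finset.sum_subset (fun m hm => ?_) fun m hm hm' => ?_
  · rw [Finset.mem_finsuppAntidiag, ← Finsupp.degree_eq_sum]
    exact ⟨(Finset.mem_filter.mp hm).2, Finset.subset_univ _⟩
  · rw [Finset.mem_filter, not_and_or, notMem_support_iff] at hm'
    rw [hm'.resolve_right (not_not.mpr (Exponents.degree_eq ⟨m, hm⟩)), zero_mul]

variable [Fintype ι] {D : ℕ}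

/-- The Macaulay matrix of a family `f` of polynomials, for the multipliers `a`: its rows are the
coefficients in degree `D` of the combinations `∑ i, a m i * f i`. -/
def macaulay (a : Exponents σ D → ι → MvPolynomial σ R) :
    (ι → MvPolynomial σ R) →ₗ[R] Matrix (Exponents σ D) (Exponents σ D) R where
  toFun f := Matrix.of fun m m' => coeff m'.1 (∑ i, a m i * f i)
  map_add' f g := by
    ext
    simp [mul_add, Finset.sum_add_distrib]
  map_smul' c f := by
    ext
    simp [coeff_sum, Finset.mul_sum]

lemma macaulay_mulVec_eq_zero {k e : ℕ} (a : Exponents σ (k + e) → ι → MvPolynomial σ R)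
    {f : ι → MvPolynomial σ R} (hf : ∀ i, (f i).IsHomogeneous e) {v : σ → R}
    (hv : ∀ i, eval v (f i) = 0) :
    (macaulay a f).mulVec (fun m => ∏ i, v i ^ m.1 i) = 0 := by
  ext m
  refine (eval_homogeneousComponent (k + e) (∑ i, a m i * f i) v).symm.trans ?_
  simp [homogeneousComponent_mul_of_isHomogeneous _ (hf _), hv]

lemma eq_zero_of_det_macaulay_ne_zero [IsDomain R] {k e : ℕ}
    {a : Exponents σ (k + e) → ι → MvPolynomial σ R} {f : ι → MvPolynomial σ R}
    (hf : ∀ i, (f i).IsHomogeneous e) (hdet : (macaulay a f).det ≠ 0) {v : σ → R}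
    (hv : ∀ i, eval v (f i) = 0) : v = 0 := by
  have hzero := Matrix.eq_zero_of_mulVec_eq_zero hdet (macaulay_mulVec_eq_zero a hf hv)
  ext j
  have hj : Finsupp.single j (k + e) ∈ Finset.univ.finsuppAntidiag (k + e) :=
    Finset.mem_finsuppAntidiag.mpr ⟨Finsupp.univ_sum_single_apply j _, Finset.subset_univ _⟩
  have hpow := congrFun hzero ⟨_, hj⟩
  rw [Finset.prod_eq_single j (by simp +contextual) (by simp),
    Finsupp.single_eq_same] at hpow
  exact eq_zero_of_pow_eq_zero hpow

end Macaulay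

section Nullstellensatz

variable {K σ ι : Type*} [Field K] [IsAlgClosed K] {f : ι → MvPolynomial σ K}

lemma exists_pow_idealOfVars_le [Finite σ] (hf : ∀ v : σ → K, (∀ i, eval v (f i) = 0) → v = 0) :
    ∃ k, idealOfVars σ K ^ k ≤ Ideal.span (Set.range f) := by
  refine Ideal.exists_pow_le_of_le_radical_of_fg ?_ (idealOfVars_fg σ K)
  rw [← vanishingIdeal_zeroLocus_eq_radical (K := K), idealOfVars, Ideal.span_le]
  rintro _ ⟨j, rfl⟩
  rw [SetLike.mem_coe, mem_vanishingIdeal_iff]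
  intro v hv
  rw [mem_zeroLocus_iff] at hv
  have hv0 : v = 0 := hf v fun i => by
    simpa [aeval_eq_eval] using hv _ (Ideal.subset_span (Set.mem_range_self i))
  simp [hv0]

lemma exists_macaulay_eq_one [Fintype σ] [DecidableEq σ] [Fintype ι]
    (hf : ∀ v : σ → K, (∀ i, eval v (f i) = 0) → v = 0) (e : ℕ) :
    ∃ k, ∃ a : Exponents σ (k + e) → ι → MvPolynomial σ K, macaulay a f = 1 := by
  obtain ⟨k, hk⟩ := exists_pow_idealOfVars_le hf
  have hgen (m : Exponents σ (k + e)) :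
      ∃ a : ι → MvPolynomial σ K, ∑ i, a i * f i = monomial m.1 1 := by
    refine Ideal.mem_span_range_iff_exists_fun.mp (hk ?_)
    rw [monomial_mem_pow_idealOfVars_iff _ _ one_ne_zero, m.degree_eq]
    exact Nat.le_add_right k e
  choose a ha using hgen
  refine ⟨k, a, ?_⟩
  ext m m'
  change coeff m'.1 (∑ i, a m i * f i) = _
  rw [ha, coeff_monomial, Matrix.one_apply]
  simp only [Subtype.ext_iff]

end Nullstellensatz

lemma genericAff_forall_eval_eq_zero {σ ι : Type*} [Finite σ] [Finite ι] {N e : ℕ}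
    (ψ : (Fin N → ℂ) →ₗ[ℂ] ι → MvPolynomial σ ℂ) (hψ : ∀ c i, (ψ c i).IsHomogeneous e)
    {c₀ : Fin N → ℂ} (h₀ : ∀ v : σ → ℂ, (∀ i, eval v (ψ c₀ i) = 0) → v = 0) :
    GenericAff fun c => ∀ v : σ → ℂ, (∀ i, eval v (ψ c i) = 0) → v = 0 := by
  classical
  cases nonempty_fintype σ
  cases nonempty_fintype ι
  obtain ⟨k, a, ha⟩ := exists_macaulay_eq_one h₀ e
  let M : Matrix (Exponents σ (k + e)) (Exponents σ (k + e)) (MvPolynomial (Fin N) ℂ) :=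
    Matrix.of fun m m' => linForm (Matrix.entryLinearMap ℂ ℂ m m' ∘ₗ macaulay a ∘ₗ ψ)
  have hM (c : Fin N → ℂ) : eval c M.det = (macaulay a (ψ c)).det := by
    rw [RingHom.map_det]
    congr 1
    ext m m'
    simp [M]
  refine ⟨M.det, ne_zero_of_eval_ne_zero (v := c₀) ?_, fun c hc v hv => ?_⟩
  · rw [hM, ha, Matrix.det_one]
    exact one_ne_zero
  · rw [hM] at hc
    exact eq_zero_of_det_macaulay_ne_zero (hψ c) hc hv

lemma genericAff_smoothHypPoly {n N d : ℕ}
    (ψ : (Fin N → ℂ) →ₗ[ℂ] MvPolynomial (Fin (n + 1)) ℂ) (hψ : ∀ c, (ψ c).IsHomogeneous d)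
    {c₀ : Fin N → ℂ} (h₀ : SmoothHypPoly (ψ c₀)) :
    GenericAff fun c => SmoothHypPoly (ψ c) := by
  obtain ⟨g, hg, h⟩ := genericAff_forall_eval_eq_zero
    (LinearMap.pi fun i => (pderiv i).toLinearMap ∘ₗ ψ) (fun c _ => (hψ c).pderiv)
    (c₀ := c₀) fun v hv => by_contra fun hv0 => h₀ v hv0 hv
  exact ⟨g, hg, fun c hc v hv0 hv => hv0 (h c hc v hv)⟩

/-! ### A smooth cubic through the surface -/

section Reduction

variable {K : Type*} [Field K]

lemma exists_smul_eq_coe_of_valuationSubring {σ : Type*} [Finite σ] (B : ValuationSubring K)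
    {v : σ → K} (hv : v ≠ 0) :
    ∃ (c : K) (w : σ → B), (fun j => (w j : K)) = c • v ∧ ∃ i, w i = 1 := by
  obtain ⟨i₀, hi₀⟩ := Function.ne_iff.mp hv
  have : Nonempty σ := ⟨i₀⟩
  obtain ⟨i, hi⟩ := Finite.exists_max fun j => B.valuation (v j)
  have hvi : v i ≠ 0 := by
    intro h0
    refine hi₀ ?_
    simpa [h0] using hi i₀
  have hw (j : σ) : ∃ a : B, (a : K) = (v i)⁻¹ * v j := by
    obtain ⟨a, ha⟩ := (B.valuation_le_iff _ _).mp (hi j)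
    exact ⟨a, by rw [← ha]; field_simp⟩
  choose w hw using hw
  exact ⟨(v i)⁻¹, w, funext hw, i, Subtype.val_injective (by simp [hw, hvi])⟩

lemma exists_valuationSubring_natCast_mem_nonunits [CharZero K] {p : ℕ} (hp : p ≠ 1) :
    ∃ B : ValuationSubring K, (p : K) ∈ B.nonunits := by
  let A : Subring K := (Int.castRingHom K).range
  obtain ⟨B, -, hB⟩ := Ideal.image_subset_nonunits_valuationSubring (Ideal.span {(p : A)})
    fun h => by
      rw [Ideal.span_singleton_eq_top, isUnit_iff_exists_inv] at h
      obtain ⟨⟨_, m, rfl⟩, h⟩ := h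
      have hK : (p : K) * (m : K) = 1 := congrArg Subtype.val h
      have hunit : (p : ℤ) * m = 1 := by exact_mod_cast hK
      exact hp (by exact_mod_cast Int.isUnit_iff_natAbs_eq.mp (.of_mul_eq_one _ hunit))
  exact ⟨B, hB ⟨_, Ideal.mem_span_singleton_self _, by simp⟩⟩

end Reduction

/-- A common zero in characteristic zero, scaled to be primitive in a valuation ring above `p`,
would reduce to a nontrivial one modulo `p`. -/
lemma eq_zero_of_reduction.{u} {K : Type u} [Field K] [CharZero K] {σ ι : Type*} [Finite σ] {p : ℕ}
    (hp : p.Prime) {d : ℕ} {f : ι → MvPolynomial σ ℤ} (hf : ∀ i, (f i).IsHomogeneous d)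
    (hred : ∀ (k : Type u) [Field k] [CharP k p] (v : σ → k),
      (∀ i, aeval v (f i) = 0) → v = 0)
    {v : σ → K} (hv : ∀ i, aeval v (f i) = 0) : v = 0 := by
  by_contra hv0
  obtain ⟨B, hB⟩ := exists_valuationSubring_natCast_mem_nonunits (K := K) hp.ne_one
  obtain ⟨c, w, hwv, i, hwi⟩ := exists_smul_eq_coe_of_valuationSubring B hv0
  have hw (j : ι) : aeval w (f j) = 0 := by
    have hscale : aeval (c • v) (f j) = 0 := by
      rw [aeval_def, ← eval_map, eval_smul_of_isHomogeneous ((hf j).map _), eval_map, ← aeval_def,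
        hv, mul_zero]
    rw [← hwv] at hscale
    exact Subtype.val_injective ((comp_aeval_apply w B.subtype.toIntAlgHom (f j)).trans hscale)
  have hpk : (p : IsLocalRing.ResidueField B) = 0 := by
    have hmem : (p : B) ∈ IsLocalRing.maximalIdeal B := ValuationSubring.coe_mem_nonunits_iff.mp hB
    rw [← map_natCast (IsLocalRing.residue B) p]
    exact (IsLocalRing.residue_eq_zero_iff _).mpr hmem
  have : CharP (IsLocalRing.ResidueField B) p := (CharP.charP_iff_prime_eq_zero hp).mpr hpk
  have hres := hred _ (fun j => IsLocalRing.residue B (w j)) fun j => by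
    rw [← map_zero (IsLocalRing.residue B), ← hw j]
    exact (comp_aeval_apply w (IsLocalRing.residue B).toIntAlgHom (f j)).symm
  simpa [hwi] using congrFun hres i

section ModelCubic

variable {R : Type*} [CommRing R]

/-- A cubic form in the ideal of the five quadrics. The coefficients are chosen so that its
gradient modulo two is triangular enough to be solved by hand. -/
def cubic (x : Fin 6 → R) : R :=
  (x 1 + x 3) * quad x 1 + x 1 * quad x 4 + (x 2 + x 5) * quad x 0 + x 2 * quad x 2 +
    x 4 * quad x 3

variable (R) in
lemma map_cubic_X : map (Int.castRingHom R) (cubic X) = cubic X := by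
  simp [cubic, map_quad]

variable (R) in
lemma isHomogeneous_cubic_X :
    (cubic (X : Fin 6 → MvPolynomial (Fin 6) R)).IsHomogeneous 3 := by
  have hX := isHomogeneous_X R (σ := Fin 6)
  have hQ := isHomogeneous_quad hX
  exact (((((hX 1).add (hX 3)).mul (hQ 1)).add ((hX 1).mul (hQ 4))).add
    (((hX 2).add (hX 5)).mul (hQ 0))).add ((hX 2).mul (hQ 2)) |>.add ((hX 4).mul (hQ 3))

lemma aeval_pderiv_cubic_X (v : Fin 6 → R) (i : Fin 6) :
    aeval v (pderiv i (cubic (X : Fin 6 → MvPolynomial (Fin 6) ℤ))) =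
      eval v (pderiv i (cubic X)) := by
  rw [aeval_def, ← eval_map, ← pderiv_map, algebraMap_int_eq, map_cubic_X]

lemma eval_pderiv_cubic_X_of_charTwo [CharP R 2] (v : Fin 6 → R) (i : Fin 6) :
    eval v (pderiv i (cubic X)) =
      ![v 4 ^ 2, v 3 ^ 2, v 5 ^ 2, v 1 ^ 2 + v 4 * v 5 + v 0 ^ 2,
        v 1 ^ 2 + v 2 ^ 2 + v 3 * v 5 + v 0 ^ 2, v 2 ^ 2 + v 3 * v 4 + v 0 ^ 2] i := by
  have h2 : (2 : R) = 0 := CharTwo.two_eq_zero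
  have h4 : (4 : R) = 0 := by linear_combination 2 * h2
  fin_cases i <;> simp [cubic, quad, pderiv_X] <;> ring_nf <;>
    simp [CharTwo.neg_eq, CharTwo.sub_eq_add, h2, h4]

lemma eq_zero_of_eval_pderiv_cubic_X_of_charTwo {k : Type*} [Field k] [CharP k 2]
    {v : Fin 6 → k} (hv : ∀ i, eval v (pderiv i (cubic X)) = 0) : v = 0 := by
  simp only [eval_pderiv_cubic_X_of_charTwo] at hv
  have h4 : v 4 = 0 := pow_eq_zero_iff two_ne_zero |>.mp (hv 0)
  have h3 : v 3 = 0 := pow_eq_zero_iff two_ne_zero |>.mp (hv 1)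
  have h5 : v 5 = 0 := pow_eq_zero_iff two_ne_zero |>.mp (hv 2)
  have e3 : v 1 ^ 2 + v 4 * v 5 + v 0 ^ 2 = 0 := hv 3
  have e4 : v 1 ^ 2 + v 2 ^ 2 + v 3 * v 5 + v 0 ^ 2 = 0 := hv 4
  have e5 : v 2 ^ 2 + v 3 * v 4 + v 0 ^ 2 = 0 := hv 5
  rw [h4] at e3
  rw [h3] at e4 e5
  have h2 : v 2 = 0 := pow_eq_zero_iff two_ne_zero |>.mp <| by linear_combination e4 - e3
  rw [h2] at e5
  have h0 : v 0 = 0 := pow_eq_zero_iff two_ne_zero |>.mp <| by linear_combination e5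
  rw [h0] at e3
  have h1 : v 1 = 0 := pow_eq_zero_iff two_ne_zero |>.mp <| by linear_combination e3
  ext i
  fin_cases i <;> assumption

lemma smoothHypPoly_cubic_X : SmoothHypPoly (n := 5) (cubic X) := fun _ hv0 hv =>
  hv0 <| eq_zero_of_reduction (p := 2) Nat.prime_two
    (fun i => (isHomogeneous_cubic_X ℤ).pderiv (i := i))
    (fun _ _ _ _ hv => eq_zero_of_eval_pderiv_cubic_X_of_charTwo fun i =>
      (aeval_pderiv_cubic_X _ i).symm.trans (hv i))
    fun i => (aeval_pderiv_cubic_X _ i).trans (hv i)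

end ModelCubic

lemma smoothHypPoly_pullback {n : ℕ} (E : (Fin (n + 1) → ℂ) ≃ₗ[ℂ] (Fin (n + 1) → ℂ))
    {f : MvPolynomial (Fin (n + 1)) ℂ} (hf : SmoothHypPoly f) :
    SmoothHypPoly (pullback E.toLinearMap f) := by
  intro v hv h
  refine hf (E v) (E.map_ne_zero_iff.mpr hv) ?_
  let φ : (Fin (n + 1) → ℂ) →ₗ[ℂ] ℂ :=
    Fintype.linearCombination ℂ fun k => eval (E v) (pderiv k f)
  have hφ : φ ∘ₗ E.toLinearMap = 0 := by
    refine LinearMap.pi_ext' fun i => LinearMap.ext_ring ?_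
    have hi := h i
    rw [eval_pderiv_pullback] at hi
    simpa [φ, Fintype.linearCombination_apply] using hi
  intro i
  simpa [φ, Fintype.linearCombination_apply_single] using
    LinearMap.congr_fun hφ (E.symm (Pi.single i 1))

lemma genericInSystem_smoothHypPoly (E : (Fin 6 → ℂ) ≃ₗ[ℂ] (Fin 6 → ℂ)) :
    GenericInSystem (linSys (pentagonalSurface E) 3 1) SmoothHypPoly := by
  intro N ψ hψ
  have hmem (c : Fin N → ℂ) : ψ c ∈ linSys (pentagonalSurface E) 3 1 :=
    hψ ▸ LinearMap.mem_range_self ψ c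
  obtain ⟨c₀, hc₀⟩ : pullback E.toLinearMap (cubic X) ∈ LinearMap.range ψ := by
    rw [hψ]
    refine pullback_mem_linSys (isHomogeneous_cubic_X ℂ) fun x hx => ?_
    simp [cubic, eval_quad_X, hx]
  exact genericAff_smoothHypPoly ψ (fun c => (mem_linSys_one.mp (hmem c)).1)
    (hc₀ ▸ smoothHypPoly_pullback E smoothHypPoly_cubic_X)

end QuinticDelPezzo

open QuinticDelPezzo in
/-- **Quintic del Pezzo surfaces and the congruence of their secant lines.**

Let `S ⊆ ℙ⁵` be a quintic del Pezzo surface: the image of `ℙ²` under the linear system of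
plane cubics through four points in general position.  Then:

* `S` admits a congruence of secant lines: through the general point of `ℙ⁵` there passes a
  unique secant line to `S`;
* the linear system of quadric hypersurfaces through `S` is `5`-dimensional, and (any basis
  of) it defines a dominant rational map `μ : ℙ⁵ ⇢ ℙ⁴`, whose general fibre is the general
  line of the congruence;
* if `X` is a general cubic fourfold containing `S`, the restriction `μ|_X : X ⇢ ℙ⁴` is
  birational. -/
theorem quintic_del_pezzo_secant_congruence
    (p : Fin 4 → P 2) (hp : GeneralPosition₄ p)
    (b : Fin 6 → MvPolynomial (Fin 3) ℂ) (hb : LinearIndependent ℂ b)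
    (hbsys : Submodule.span ℂ (Set.range b) = linSys {x : P 2 | ∃ i, x = p i} 3 1)
    (S : Set (P 5)) (hS : S = planarImage b) :
    -- congruence of secant lines
    (GenericP fun z : P 5 => ∃! L : Set (P 5), IsSecantLine L S ∧ z ∈ L) ∧
    -- the space of quadrics through S is 5-dimensional
    Module.finrank ℂ (linSys S 2 1) = 5 ∧
    -- behaviour of the induced rational map μ : ℙ⁵ ⇢ ℙ⁴
    ∀ μ : RatMap 5 4, μ.d = 2 → LinearIndependent ℂ μ.g →
      Submodule.span ℂ (Set.range μ.g) = linSys S 2 1 →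
      -- μ is dominant
      DominantTo μ Set.univ Set.univ ∧
      -- the general fibre of μ is the unique secant line through a general point
      (GenericP fun z : P 5 =>
        ∃ L : Set (P 5), IsSecantLine L S ∧ z ∈ L ∧
          {w : P 5 | w ∉ S ∧ μ.toFun w = μ.toFun z} = L \ S) ∧
      -- the restriction of μ to a general cubic fourfold through S is birational onto ℙ⁴
      GenericInSystem (linSys S 3 1) fun f =>
        SmoothHypPoly f ∧ BirationalOnto μ (hypersurface f) Set.univ := by
  subst hS
  obtain ⟨E, hE⟩ := exists_planarImage_eq_pentagonalSurface hp hbsys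
  rw [hE]
  refine ⟨genericP_existsUnique_isSecantLine E, finrank_linSys_two, fun μ _ hμ hspan => ?_⟩
  obtain ⟨U, hU⟩ := exists_target_coordinates hμ hspan
  exact ⟨dominantTo_univ hU, genericP_fibre hU, fun N ψ hψ =>
    GenericAff.and (genericInSystem_smoothHypPoly E N ψ hψ)
      (genericInSystem_birationalOnto hU N ψ hψ)⟩

end
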